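/- Assume f satisfies (A1)–(A3) and fix χ > 0. Define q_ε(ŷ) := δ_ε · inf{e^{ε|m|} Q_ε(f̂^m(ŷ)) : m ≤ 0} and NUE^#_χ := {x̂ ∈ NUE*_χ : limsup_{n→+∞} q_ε(f̂^n(x̂)) > 0 and limsup_{n→−∞} q_ε(f̂^n(x̂)) > 0}. For all sufficiently small ε > 0 there exists a countable family 𝔄 of ε-charts such that, with Σ, σ, Σ^# as below and π : Σ → M̂ the map assigning to each ε-gpo the unique point of M̂ it shadows: (1) π is Hölder continuous, i.e. there are C > 0 and α ∈ (0,1] with d̂(π(v), π(w)) ≤ C·d(v,w)^α for all v, w ∈ Σ, where d(v, w) := exp(−min{|n| : v_n ≠ w_n}); (2) π ∘ σ = f̂ ∘ π; (3) π[Σ^#] ⊇ NUE^#_χ. -/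

import Mathlib

open Real MeasureTheory Filter Topology Metric Set

noncomputable section

namespace OneDim

/-- The interval `M = [0, 1/2]`. -/
def Mset : Set ℝ := Set.Icc 0 (1/2)

/-- Data of a piecewise `C^{1+β}` interval map `f : M → M` with discontinuity set `D`,
constants `β ∈ (0,1)`, `a, K > 1`, radius function `r` and inverse branches `g`. -/
structure GoodMap where
  f : ℝ → ℝ
  D : Set ℝ
  β : ℝ
  a : ℝ
  K : ℝ
  r : ℝ → ℝ
  g : ℝ → ℝ → ℝ
  hβ0 : 0 < β
  hβ1 : β < 1
  ha : 1 < a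
  hK : 1 < K
  hmaps : ∀ x ∈ Mset, f x ∈ Mset
  hD : D ⊆ Mset
  hdiff : DifferentiableOn ℝ f (Mset \ D)

namespace GoodMap

/-- The critical set `C = {x ∈ M \ D : df_x = 0}`. -/
def crit (F : GoodMap) : Set ℝ := {x | x ∈ Mset \ F.D ∧ deriv F.f x = 0}

/-- The singular set `S = C ∪ D`. -/
def S (F : GoodMap) : Set ℝ := F.crit ∪ F.D

/-- Distance to the singular set. -/
def dS (F : GoodMap) (x : ℝ) : ℝ := Metric.infDist x F.S

/-- Conditions (A1)–(A3). -/
def SatA (F : GoodMap) : Prop :=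
  ∀ x ∈ Mset, x ∉ F.S → F.f x ∉ F.S →
    (min (F.dS x ^ F.a) (F.dS (F.f x) ^ F.a) < F.r x ∧ F.r x < 1) ∧
    -- (A1)
    (Set.InjOn F.f (Metric.ball x (2 * F.r x)) ∧
      (∀ y ∈ Metric.ball x (2 * F.r x), DifferentiableAt ℝ F.f y) ∧
      F.g x (F.f x) = x ∧
      (∀ z ∈ Metric.ball (F.f x) (2 * F.r x), F.f (F.g x z) = z) ∧
      Set.InjOn (F.g x) (Metric.ball (F.f x) (2 * F.r x)) ∧
      (∀ z ∈ Metric.ball (F.f x) (2 * F.r x), DifferentiableAt ℝ (F.g x) z)) ∧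
    -- (A2)
    ((∀ y ∈ Metric.ball x (2 * F.r x),
        F.dS x ^ F.a ≤ |deriv F.f y| ∧ |deriv F.f y| ≤ F.dS x ^ (-F.a)) ∧
      (∀ z ∈ Metric.ball (F.f x) (2 * F.r x),
        F.dS x ^ F.a ≤ |deriv (F.g x) z| ∧ |deriv (F.g x) z| ≤ F.dS x ^ (-F.a))) ∧
    -- (A3)
    ((∀ y ∈ Metric.ball x (2 * F.r x), ∀ z ∈ Metric.ball x (2 * F.r x),
        |deriv F.f y - deriv F.f z| ≤ F.K * |y - z| ^ F.β) ∧
      (∀ y ∈ Metric.ball (F.f x) (2 * F.r x), ∀ z ∈ Metric.ball (F.f x) (2 * F.r x),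
        |deriv (F.g x) y - deriv (F.g x) z| ≤ F.K * |y - z| ^ F.β))

end GoodMap

/-- Membership in the natural extension space `M̂`. -/
def inMhat (f : ℝ → ℝ) (x : ℤ → ℝ) : Prop :=
  (∀ n, x n ∈ Mset) ∧ ∀ n : ℤ, f (x (n - 1)) = x n

/-- The natural extension map `f̂` (left shift). -/
def fhat (x : ℤ → ℝ) : ℤ → ℝ := fun n => x (n + 1)

/-- Iterate `f̂^k` of the natural extension map, `k ∈ ℤ`. -/
def fhatI (k : ℤ) (x : ℤ → ℝ) : ℤ → ℝ := fun n => x (n + k)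

/-- The metric `d̂(x̂,ŷ) = sup{2^n d(x_n,y_n) : n ≤ 0}` on `M̂`. -/
def dhat (x y : ℤ → ℝ) : ℝ :=
  sSup {t : ℝ | ∃ n : ℤ, n ≤ 0 ∧ t = (2:ℝ) ^ n * |x n - y n|}

/-- The invertible derivative cocycle `d̂f^{(n)}` over `f̂`. -/
def dfhat (f : ℝ → ℝ) (x : ℤ → ℝ) (n : ℤ) : ℝ :=
  if 0 ≤ n then ∏ j ∈ Finset.range n.toNat, deriv f (x (j : ℤ))
  else (∏ j ∈ Finset.range (-n).toNat, deriv f (x (-(j : ℤ) - 1)))⁻¹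

/-- The Pesin parameter `u(x̂)`. -/
def uPes (f : ℝ → ℝ) (χ : ℝ) (x : ℤ → ℝ) : ℝ :=
  Real.sqrt (∑' n : ℕ, Real.exp (2 * (n:ℝ) * χ) * (dfhat f x (-(n:ℤ))) ^ 2)

/-- The Pesin chart `Ψ_{x̂}(t) = t/u(x̂) + x₀`. -/
def Psi (f : ℝ → ℝ) (χ : ℝ) (x : ℤ → ℝ) (t : ℝ) : ℝ := t / uPes f χ x + x 0

/-- The set `NUE_χ`. -/
def NUE (F : GoodMap) (χ : ℝ) : Set (ℤ → ℝ) :=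
  {x | inMhat F.f x ∧ (∀ n, x n ∉ F.S) ∧
    (∃ l > χ, Tendsto (fun n : ℕ => Real.log |dfhat F.f x (n:ℤ)| / (n:ℝ)) atTop (𝓝 l)) ∧
    (∃ l > χ, Tendsto (fun n : ℕ => Real.log |dfhat F.f x (-(n:ℤ))| / (-(n:ℝ))) atTop (𝓝 l))}

/-- `ρ(x̂) = d({x₋₁,x₀,x₁}, S)`. -/
def rho (F : GoodMap) (x : ℤ → ℝ) : ℝ :=
  min (F.dS (x (-1))) (min (F.dS (x 0)) (F.dS (x 1)))

/-- `I_ε = {e^{-εn/3} : n ≥ 0}`. -/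
def Ieps (ε : ℝ) : Set ℝ := {q | ∃ n : ℕ, q = Real.exp (-(ε * n) / 3)}

/-- `Q̃_ε(x̂)`. -/
def Qtilde (F : GoodMap) (χ ε : ℝ) (x : ℤ → ℝ) : ℝ :=
  ε ^ (3 / F.β) *
    min (uPes F.f χ x ^ (-(24 / F.β)))
      (uPes F.f χ (fhatI (-1) x) ^ (-(12 / F.β)) * rho F x ^ (72 * F.a / F.β))

/-- `Q_ε(x̂) = max{q ∈ I_ε : q ≤ Q̃_ε(x̂)}`. -/
def Qeps (F : GoodMap) (χ ε : ℝ) (x : ℤ → ℝ) : ℝ :=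
  sSup {q | q ∈ Ieps ε ∧ q ≤ Qtilde F χ ε x}

/-- The regular set. -/
def Reg (F : GoodMap) : Set (ℤ → ℝ) :=
  {x | inMhat F.f x ∧ (∀ n, x n ∉ F.S) ∧
    Tendsto (fun n : ℕ => Real.log (F.dS (x (n:ℤ))) / (n:ℝ)) atTop (𝓝 0) ∧
    Tendsto (fun n : ℕ => Real.log (F.dS (x (-(n:ℤ)))) / (n:ℝ)) atTop (𝓝 0)}

/-- The set `NUE*_χ`. -/
def NUEstar (F : GoodMap) (χ : ℝ) : Set (ℤ → ℝ) :=
  {x | x ∈ NUE F χ ∧ x ∈ Reg F ∧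
    (∃ nk : ℕ → ℤ, Tendsto nk atTop atBot ∧
      Tendsto (fun k => uPes F.f χ (fhatI (nk k) x)) atTop (𝓝 (uPes F.f χ x))) ∧
    Tendsto (fun n : ℕ => Real.log (uPes F.f χ (fhatI (-(n:ℤ)) x)) / (-(n:ℝ))) atTop (𝓝 0)}

/-- An ε-chart is a pair `(x̂, p)`, representing `Ψ_{x̂}` restricted to `[-p,p]`. -/
structure Chart where
  x : ℤ → ℝ
  p : ℝ

/-- `(x̂, p)` is a genuine ε-chart. -/
def IsChart (F : GoodMap) (χ ε : ℝ) (c : Chart) : Prop :=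
  c.x ∈ NUE F χ ∧ 0 < c.p ∧ c.p ≤ Qeps F χ ε c.x

/-- ε-overlap of two ε-charts. -/
def Overlap (F : GoodMap) (χ ε : ℝ) (c₁ c₂ : Chart) : Prop :=
  Real.exp (-ε) ≤ c₁.p / c₂.p ∧ c₁.p / c₂.p ≤ Real.exp ε ∧
  |c₁.x 0 - c₂.x 0| + |(uPes F.f χ c₁.x)⁻¹ - (uPes F.f χ c₂.x)⁻¹| < (c₁.p * c₂.p) ^ 4

/-- `g_{x̂} = g_{x₋₁}`, the inverse branch of `f` taking `x₀` to `x₋₁`. -/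
def ghat (F : GoodMap) (x : ℤ → ℝ) : ℝ → ℝ := F.g (x (-1))

/-- `G_{x̂} = Ψ_{f̂⁻¹x̂}⁻¹ ∘ g_{x̂} ∘ Ψ_{x̂}`. -/
def Gmap (F : GoodMap) (χ : ℝ) (x : ℤ → ℝ) (t : ℝ) : ℝ :=
  uPes F.f χ (fhatI (-1) x) * (ghat F x (Psi F.f χ x t) - x (-1))

/-- `G_{x̂,ŷ} = Ψ_{ŷ}⁻¹ ∘ g_{x̂} ∘ Ψ_{x̂}`. -/
def Gmap2 (F : GoodMap) (χ : ℝ) (x y : ℤ → ℝ) (t : ℝ) : ℝ :=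
  uPes F.f χ y * (ghat F x (Psi F.f χ x t) - y 0)

/-- `F_{x̂} = Ψ_{f̂x̂}⁻¹ ∘ f ∘ Ψ_{x̂}`. -/
def Fmap (F : GoodMap) (χ : ℝ) (x : ℤ → ℝ) (t : ℝ) : ℝ :=
  uPes F.f χ (fhat x) * (F.f (Psi F.f χ x t) - x 1)

/-- `δ_ε = e^{-εn}` where `n` is the unique positive integer with `e^{-εn} < ε ≤ e^{-ε(n-1)}`. -/
def deltaEps (ε : ℝ) : ℝ :=
  Real.exp (-(ε * ((⌊Real.log (1 / ε) / ε⌋ + 1 : ℤ) : ℝ)))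

/-- Weak edge `v ⤎ w` (from `w = Ψ_{x̂}^p` to `v = Ψ_{ŷ}^q`). -/
def WeakEdge (F : GoodMap) (χ ε : ℝ) (v w : Chart) : Prop :=
  IsChart F χ ε v ∧ IsChart F χ ε w ∧
  Overlap F χ ε ⟨fhatI (-1) w.x, v.p⟩ v ∧
  w.p ≤ Real.exp ε * v.p

/-- Edge `v ← w` (from `w = Ψ_{x̂}^p` to `v = Ψ_{ŷ}^q`). -/
def Edge (F : GoodMap) (χ ε : ℝ) (v w : Chart) : Prop :=
  IsChart F χ ε v ∧ IsChart F χ ε w ∧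
  Overlap F χ ε ⟨fhatI (-1) w.x, v.p⟩ v ∧
  |v.x 1 - w.x 0| < v.p ∧
  Real.exp (-v.p) ≤ uPes F.f χ (fhat v.x) / uPes F.f χ w.x ∧
  uPes F.f χ (fhat v.x) / uPes F.f χ w.x ≤ Real.exp v.p ∧
  w.p = min (Real.exp ε * v.p) (deltaEps ε * Qeps F χ ε w.x)

/-- ε-generalized pseudo-orbit. -/
def IsGPO (F : GoodMap) (χ ε : ℝ) (v : ℤ → Chart) : Prop :=
  ∀ n : ℤ, Edge F χ ε (v n) (v (n + 1))

/-- weak ε-generalized pseudo-orbit. -/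
def IsWeakGPO (F : GoodMap) (χ ε : ℝ) (v : ℤ → Chart) : Prop :=
  ∀ n : ℤ, WeakEdge F χ ε (v n) (v (n + 1))

/-- The range `Ψ_{x̂}([-p,p])` of an ε-chart. -/
def chartRange (F : GoodMap) (χ : ℝ) (c : Chart) : Set ℝ :=
  Psi F.f χ c.x '' Set.Icc (-c.p) c.p

/-- A bi-infinite sequence of ε-charts shadows `x̂ ∈ M̂`. -/
def Shadows (F : GoodMap) (χ : ℝ) (v : ℤ → Chart) (x : ℤ → ℝ) : Prop :=
  inMhat F.f x ∧ ∀ n : ℤ, x n ∈ chartRange F χ (v n)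

/-- `q_ε(x̂) = δ_ε inf{e^{ε|m|} Q_ε(f̂^m x̂) : m ≤ 0}`. -/
def qeps (F : GoodMap) (χ ε : ℝ) (x : ℤ → ℝ) : ℝ :=
  deltaEps ε *
    sInf {t : ℝ | ∃ m : ℤ, m ≤ 0 ∧ t = Real.exp (ε * |(m:ℝ)|) * Qeps F χ ε (fhatI m x)}

/-- Recurrence: some symbol repeats infinitely often in the future and some in the past. -/
def Recurrent {V : Type*} (v : ℤ → V) : Prop :=
  (∃ c, {n : ℤ | 0 < n ∧ v n = c}.Infinite) ∧ ∃ c, {n : ℤ | n < 0 ∧ v n = c}.Infinite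

/-- The distance `d(v,w) = exp(-min{|n| : v_n ≠ w_n})` on sequence spaces. -/
def dSigma {V : Type*} (v w : ℤ → V) : ℝ :=
  sSup {t : ℝ | ∃ n : ℤ, v n ≠ w n ∧ t = Real.exp (-|(n:ℝ)|)}

/-- Sup norm over a set. -/
def supNorm (h : ℝ → ℝ) (I : Set ℝ) : ℝ := sSup ((fun t => |h t|) '' I)

/-- Hölder constant over a set. -/
def holConst (γ : ℝ) (h : ℝ → ℝ) (I : Set ℝ) : ℝ :=
  sSup {r : ℝ | ∃ t ∈ I, ∃ s ∈ I, t ≠ s ∧ r = |h t - h s| / |t - s| ^ γ}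

/-- The set `NUE^#_χ`. -/
def NUEsharp (F : GoodMap) (χ ε : ℝ) : Set (ℤ → ℝ) :=
  {x | x ∈ NUEstar F χ ∧
    0 < Filter.limsup (fun n : ℕ => qeps F χ ε (fhatI (n:ℤ) x)) atTop ∧
    0 < Filter.limsup (fun n : ℕ => qeps F χ ε (fhatI (-(n:ℤ)) x)) atTop}

/-!
Measured with the weight `u(x̂)`, the inverse branch `g` along the past of `x̂` has derivative at
most `e^{-χ}` at the centre, and `Q_ε(x̂)` is so small that the Hölder bound on `dg` keeps it an
`e^{-χ/2}`-contraction between the chart domains of an edge. Pulling back along an ε-gpo therefore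
yields a unique shadowed orbit, and orbits shadowed by two ε-gpos that agree for times `|m| ≤ n` are
`e^{-χn/2}`-close at time `0`, which gives the Hölder continuity.

The shadowed orbit has to stay in `M`, although chart domains may stick out of `M`. Under the
condition `p ≤ e^{ε|m|} Q_ε(f̂^m(x̂))` for `m ≤ 0`, the whole backward orbit of a point of `M` in
the chart is defined and converges to the past of `x̂`. If it left `M`, its nearest points in `M`
would be eventually a backward orbit in the two-point set `{0, 1/2}`, and finiteness would propagate
this to all times; but at the time of the exit, local injectivity sends the nearest endpoint to an
interior point of `M`.

For the coding, `q_ε` satisfies exactly the recursion (E2.3). Where `Q_ε` is bounded below, the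
positions and parameters around time `0` stay in a compact set, so countably many centres, finitely
many for each pair of values of `Q_ε` and `q_ε`, approximate all points well enough for their charts
to be joined by edges; this finiteness turns `limsup q_ε > 0` into recurrence.
-/

/-! ### Real sequences and finite sets -/

lemma tendsto_average_succ_iff {u : ℕ → ℝ} {l : ℝ} :
    Tendsto (fun n : ℕ => (∑ j ∈ Finset.range n, u (j + 1)) / n) atTop (𝓝 l) ↔
      Tendsto (fun n : ℕ => (∑ j ∈ Finset.range n, u j) / n) atTop (𝓝 l) := by
  have hinv := tendsto_one_div_add_atTop_nhds_zero_nat (𝕜 := ℝ)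
  have hratio : Tendsto (fun n : ℕ => (n : ℝ) / (n + 1)) atTop (𝓝 1) :=
    tendsto_natCast_div_add_atTop 1
  have hratio' : Tendsto (fun n : ℕ => (1 : ℝ) + 1 / n) atTop (𝓝 1) := by
    simpa using tendsto_const_nhds.add (tendsto_one_div_atTop_nhds_zero_nat (𝕜 := ℝ))
  rw [← tendsto_add_atTop_iff_nat (f := fun n : ℕ => (∑ j ∈ Finset.range n, u j) / n) 1]
  constructor <;> intro h
  · have := (h.mul hratio).add (hinv.const_mul (u 0))
    rw [mul_one, mul_zero, add_zero] at this
    refine this.congr' ?_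
    filter_upwards [eventually_gt_atTop 0] with n hn
    rw [Finset.sum_range_succ']
    push_cast
    field_simp
  · have := (h.mul hratio').sub ((tendsto_one_div_atTop_nhds_zero_nat (𝕜 := ℝ)).const_mul (u 0))
    rw [mul_one, mul_zero, sub_zero] at this
    refine this.congr' ?_
    filter_upwards [eventually_gt_atTop 0] with n hn
    rw [Finset.sum_range_succ']
    push_cast
    field_simp
    ring

lemma csInf_mem_of_subset_range {e : ℤ → ℝ} (he : Monotone e) (he0 : Tendsto e atBot (𝓝 0))
    {s : Set ℝ} (hs : s ⊆ range e) (hpos : 0 < sInf s) : sInf s ∈ s := by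
  have hne : s.Nonempty := nonempty_iff_ne_empty.2 fun h => by simp [h] at hpos
  have hbdd : BddBelow s := by
    by_contra h
    exact hpos.ne' (Real.sInf_of_not_bddBelow h)
  obtain ⟨N, hN⟩ := eventually_atBot.1 (he0.eventually (gt_mem_nhds hpos))
  have hJ : (e ⁻¹' s).Nonempty := by
    obtain ⟨t, ht⟩ := hne
    obtain ⟨j, rfl⟩ := hs ht
    exact ⟨j, ht⟩
  have hJbdd : BddBelow (e ⁻¹' s) :=
    ⟨N, fun j hj => le_of_not_ge fun hjN => (hN j hjN).not_ge (csInf_le hbdd hj)⟩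
  have hleast : IsLeast s (e (sInf (e ⁻¹' s))) := by
    refine ⟨Int.csInf_mem hJ hJbdd, fun t ht => ?_⟩
    obtain ⟨j, rfl⟩ := hs ht
    exact he (csInf_le hJbdd ht)
  exact hleast.csInf_eq ▸ hleast.1

lemma inf_ciInf_nat_succ {α : Type*} [ConditionallyCompleteLattice α] {u : ℕ → α}
    (hu : BddBelow (range u)) : u 0 ⊓ ⨅ k, u (k + 1) = ⨅ k, u k := by
  have hu' : BddBelow (range fun k => u (k + 1)) := hu.mono (range_comp_subset_range _ u)
  refine le_antisymm (le_ciInf fun k => ?_)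
    (le_inf (ciInf_le hu 0) (le_ciInf fun k => ciInf_le hu _))
  cases k with
  | zero => exact inf_le_left
  | succ k => exact inf_le_right.trans (ciInf_le hu' k)

lemma exists_infinite_fiber_of_mapsTo {α β : Type*} {s : Set α} {t : Set β} {f : α → β}
    (hs : s.Infinite) (ht : t.Finite) (hf : MapsTo f s t) :
    ∃ b, {a | a ∈ s ∧ f a = b}.Infinite := by
  by_contra! h
  refine hs ((ht.biUnion fun b _ => h b).subset fun a ha => ?_)
  exact mem_biUnion (hf ha) ⟨ha, rfl⟩

lemma div_mem_Icc_exp_of_abs_log_sub_log_le {a b q : ℝ} (ha : 0 < a) (hb : 0 < b)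
    (h : |Real.log a - Real.log b| ≤ q) : a / b ∈ Icc (Real.exp (-q)) (Real.exp q) := by
  rw [← Real.log_div ha.ne' hb.ne', abs_le, Real.le_log_iff_exp_le (div_pos ha hb),
    Real.log_le_iff_le_exp (div_pos ha hb)] at h
  exact h

lemma abs_inv_sub_inv_le_abs_log_sub_log {a b : ℝ} (ha : 1 ≤ a) (hb : 1 ≤ b) :
    |a⁻¹ - b⁻¹| ≤ |Real.log a - Real.log b| := by
  wlog hab : a ≤ b generalizing a b
  · rw [abs_sub_comm, abs_sub_comm (Real.log a)]
    exact this hb ha (le_of_not_ge hab)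
  have ha0 : 0 < a := zero_lt_one.trans_le ha
  have hb0 : 0 < b := zero_lt_one.trans_le hb
  have hlog := Real.one_sub_inv_le_log_of_pos (div_pos hb0 ha0)
  rw [Real.log_div hb0.ne' ha0.ne'] at hlog
  rw [abs_of_nonneg (sub_nonneg.2 (inv_anti₀ ha0 hab)),
    abs_sub_comm, abs_of_nonneg (sub_nonneg.2 (Real.log_le_log ha0 hab))]
  have hfactor : a⁻¹ - b⁻¹ = a⁻¹ * (1 - (b / a)⁻¹) := by field_simp
  have hnonneg : 0 ≤ 1 - (b / a)⁻¹ := by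
    rw [inv_div, sub_nonneg, div_le_one hb0]
    exact hab
  calc a⁻¹ - b⁻¹ ≤ 1 * (1 - (b / a)⁻¹) :=
        hfactor ▸ mul_le_mul_of_nonneg_right (inv_le_one_of_one_le₀ ha) hnonneg
    _ ≤ _ := by rwa [one_mul]

/-! ### Invariance of an interval along backward orbits -/

lemma map_mem_of_backward_orbit {α : Type*} {φ : α → α} {E : Set α} (hE : E.Finite) {e : ℕ → α}
    (he : ∀ n, e n ∈ E) (hφ : ∀ n, φ (e (n + 1)) = e n) : φ (e 0) ∈ E := by
  have hiter : ∀ i n, φ^[i] (e (n + i)) = e n := by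
    intro i
    induction i with
    | zero => exact fun n => rfl
    | succ i ih => exact fun n => by rw [Function.iterate_succ_apply, ← add_assoc, hφ, ih]
  obtain ⟨i, -, j, -, hij, heq⟩ :=
    Set.infinite_univ.exists_ne_map_eq_of_mapsTo (f := e) (fun n _ => he n) hE
  wlog hlt : i < j generalizing i j
  · exact this j i hij.symm heq.symm (lt_of_le_of_ne (not_lt.1 hlt) hij.symm)
  obtain ⟨p, rfl⟩ := Nat.exists_eq_add_of_lt hlt
  have hper : e 0 = e (p + 1) := by
    calc e 0 = φ^[i] (e (0 + i)) := (hiter i 0).symm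
      _ = φ^[i] (e (p + 1 + i)) := by rw [zero_add, heq]; congr 2; ring
      _ = e (p + 1) := hiter i _
  rw [hper, hφ]
  exact he p

lemma map_mem_of_backward_pseudoOrbit {X : Type*} [MetricSpace X] {φ : X → X} {E : Set X}
    (hE : E.Finite) {δ : ℝ} (hδ : ∀ s ∈ E, ∀ t ∈ E, dist s t < δ → s = t) {e : ℕ → X}
    (he : ∀ n, e n ∈ E) (hclose : ∀ n, dist (φ (e (n + 1))) (e n) < δ)
    (hlim : Tendsto (fun n => dist (φ (e (n + 1))) (e n)) atTop (𝓝 0)) : φ (e 0) ∈ E := by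
  have hfin : ((fun q : X × X => dist (φ q.1) q.2) '' E ×ˢ E \ {0}).Finite :=
    ((hE.prod hE).image _).subset sdiff_subset
  have hev : ∀ᶠ n in atTop, φ (e (n + 1)) = e n := by
    filter_upwards [hlim.eventually (hfin.isClosed.isOpen_compl.mem_nhds (by simp))] with n hn
    by_contra hne
    exact hn ⟨⟨(e (n + 1), e n), ⟨he _, he _⟩, rfl⟩, dist_ne_zero.2 hne⟩
  obtain ⟨N, hN⟩ := eventually_atTop.1 hev
  have hdescent : ∀ j m, N ≤ m + j → φ (e (m + 1)) = e m := by
    intro j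
    induction j with
    | zero => exact fun m hm => hN m hm
    | succ j ih =>
      intro m hm
      have horbit : φ (e (m + 1)) ∈ E :=
        map_mem_of_backward_orbit (e := fun n => e (m + 1 + n)) hE (fun n => he _)
          fun n => ih (m + 1 + n) (by omega)
      exact hδ _ horbit _ (he m) (hclose m)
  exact map_mem_of_backward_orbit hE he fun n => hdescent N n (Nat.le_add_left N n)

lemma projIcc_mem_uIcc {a b : ℝ} (hab : a ≤ b) {y : ℝ} (hy : y ∈ Icc a b) (z : ℝ) :
    (projIcc a b hab z : ℝ) ∈ uIcc z y := by
  rw [coe_projIcc, mem_uIcc]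
  rcases le_total z y with hzy | hzy
  · exact Or.inl ⟨le_max_of_le_right (le_min (hzy.trans hy.2) le_rfl), max_le hy.1
      ((min_le_right _ _).trans hzy)⟩
  · exact Or.inr ⟨le_max_of_le_right (le_min hy.2 hzy), max_le (hy.1.trans hzy) (min_le_right _ _)⟩

lemma projIcc_eq_endpoint_of_notMem {a b : ℝ} (hab : a ≤ b) {z : ℝ} (hz : z ∉ Icc a b) :
    z < a ∧ (projIcc a b hab z : ℝ) = a ∨ b < z ∧ (projIcc a b hab z : ℝ) = b := by
  rcases lt_or_ge z a with hza | hza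
  · exact Or.inl ⟨hza, by rw [projIcc_of_le_left hab hza.le]⟩
  · have hbz : b < z := not_le.1 fun h => hz ⟨hza, h⟩
    exact Or.inr ⟨hbz, by rw [projIcc_of_right_le hab hbz.le]⟩

lemma mapsTo_uIcc_of_injOn_closedBall {f : ℝ → ℝ} {c R : ℝ}
    (hcont : ContinuousOn f (closedBall c R)) (hinj : InjOn f (closedBall c R)) {x y : ℝ}
    (hx : x ∈ closedBall c R) (hy : y ∈ closedBall c R) :
    MapsTo f (uIcc x y) (uIcc (f x) (f y)) := by
  have hsub : uIcc x y ⊆ closedBall c R := by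
    rw [Real.closedBall_eq_Icc] at hx hy ⊢
    exact uIcc_subset_Icc hx hy
  rcases (hcont.mono hsub).strictMonoOn_of_injOn_Icc' inf_le_sup (hinj.mono hsub) with h | h
  · exact h.monotoneOn.mapsTo_uIcc
  · exact h.antitoneOn.mapsTo_uIcc

lemma mem_Ioo_of_mem_uIcc {a b x y t : ℝ} (hx : x ∈ Icc a b) (hy : y ∈ Icc a b)
    (ht : t ∈ uIcc x y) (htx : t ≠ x) (hty : t ≠ y) : t ∈ Ioo a b := by
  rcases mem_uIcc.1 ht with h | h
  · exact ⟨hx.1.trans_lt (lt_of_le_of_ne h.1 htx.symm), (lt_of_le_of_ne h.2 hty).trans_le hy.2⟩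
  · exact ⟨hy.1.trans_lt (lt_of_le_of_ne h.1 hty.symm), (lt_of_le_of_ne h.2 htx).trans_le hx.2⟩

lemma map_projIcc_mem_Ioo {f : ℝ → ℝ} {a b : ℝ} (hab : a ≤ b)
    (hf : MapsTo f (Icc a b) (Icc a b)) {y z : ℝ} (hy : y ∈ Icc a b) (hz : z ∉ Icc a b)
    (hfz : f z ∈ Icc a b) (hzy : |z - y| ≤ b - a)
    (hcont : ContinuousOn f (closedBall y |z - y|)) (hinj : InjOn f (closedBall y |z - y|)) :
    f (projIcc a b hab z) ∈ Ioo a b := by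
  set e : ℝ := (projIcc a b hab z : ℝ) with he_def
  have he : e ∈ Icc a b := (projIcc a b hab z).2
  have hez : e ≠ z := fun h => hz (h ▸ he)
  have hzball : z ∈ closedBall y |z - y| := by rw [mem_closedBall, Real.dist_eq]
  -- Reflecting `z` in the endpoint `e` puts `e` strictly between two points mapped into `[a, b]`.
  obtain ⟨hm, hmball⟩ : 2 * e - z ∈ Icc a b ∧ 2 * e - z ∈ closedBall y |z - y| := by
    rw [mem_closedBall, Real.dist_eq, ← sq_le_sq]
    obtain ⟨hlo, hhi⟩ := abs_le.1 hzy
    obtain ⟨hay, hyb⟩ := hy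
    rcases projIcc_eq_endpoint_of_notMem hab hz with ⟨hza, hea⟩ | ⟨hbz, heb⟩
    · rw [he_def, hea]
      exact ⟨⟨by linarith, by linarith⟩, by nlinarith⟩
    · rw [he_def, heb]
      exact ⟨⟨by linarith, by linarith⟩, by nlinarith⟩
  have hemem : e ∈ uIcc z (2 * e - z) := by
    rcases le_total z e with h | h
    · exact mem_uIcc_of_le h (by linarith)
    · exact mem_uIcc_of_ge (by linarith) h
  have heball : e ∈ closedBall y |z - y| := by
    rw [Real.closedBall_eq_Icc] at hzball hmball ⊢
    exact uIcc_subset_Icc hzball hmball hemem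
  refine mem_Ioo_of_mem_uIcc hfz (hf hm)
    (mapsTo_uIcc_of_injOn_closedBall hcont hinj hzball hmball hemem) ?_ ?_
  · exact hinj.ne heball hzball hez
  · exact hinj.ne heball hmball fun h => hez (by linarith)

lemma mem_Icc_of_backward_orbits {f : ℝ → ℝ} {a b : ℝ} (hf : MapsTo f (Icc a b) (Icc a b))
    {Y Z : ℕ → ℝ} (hY : ∀ n, Y n ∈ Icc a b) (hfY : ∀ n, f (Y (n + 1)) = Y n)
    (hZ : Z 0 ∈ Icc a b) (hfZ : ∀ n, f (Z (n + 1)) = Z n)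
    (hcont : ∀ n, ContinuousOn f (closedBall (Y (n + 1)) |Z (n + 1) - Y (n + 1)|))
    (hinj : ∀ n, InjOn f (closedBall (Y (n + 1)) |Z (n + 1) - Y (n + 1)|))
    (hlt : ∀ n, |Z (n + 1) - Y (n + 1)| < b - a)
    (hlim : Tendsto (fun n => |Z n - Y n|) atTop (𝓝 0)) : Z 1 ∈ Icc a b := by
  by_contra hZ1
  have hab : a ≤ b := (hY 0).1.trans (hY 0).2
  have hout : ∀ n, Z (n + 1) ∉ Icc a b := by
    intro n
    induction n with
    | zero => exact hZ1
    | succ n ih => exact fun h => ih (hfZ (n + 1) ▸ hf h)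
  set e : ℕ → ℝ := fun n => projIcc a b hab (Z (n + 1)) with he
  have hclose : ∀ n, dist (f (e (n + 1))) (e n) ≤ |Z (n + 1) - Y (n + 1)| := by
    intro n
    have hfe := mapsTo_uIcc_of_injOn_closedBall (hcont (n + 1)) (hinj (n + 1))
      (by rw [mem_closedBall, Real.dist_eq]) (mem_closedBall_self (abs_nonneg _))
      (projIcc_mem_uIcc hab (hY (n + 2)) (Z (n + 2)))
    rw [hfZ, hfY] at hfe
    exact Real.dist_le_of_mem_uIcc hfe (projIcc_mem_uIcc hab (hY _) _)
  have hmem : f (e 0) ∈ ({a, b} : Set ℝ) := by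
    refine map_mem_of_backward_pseudoOrbit (δ := b - a) (toFinite _) ?_ ?_
      (fun n => (hclose n).trans_lt (hlt n))
      (squeeze_zero (fun _ => dist_nonneg) hclose ((tendsto_add_atTop_iff_nat 1).2 hlim))
    · rintro s (rfl | rfl) t (rfl | rfl) h <;> rw [Real.dist_eq] at h <;>
        first
          | rfl
          | exact absurd h (not_lt.2 (by rw [abs_sub_comm]; exact le_abs_self _))
          | exact absurd h (not_lt.2 (le_abs_self _))
    · exact fun n => (projIcc_eq_endpoint_of_notMem hab (hout n)).imp And.right And.right
  have hIoo := map_projIcc_mem_Ioo hab hf (hY 1) hZ1 (hfZ 0 ▸ hZ) (hlt 0).le (hcont 0) (hinj 0)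
  rcases hmem with h | h
  · exact hIoo.1.ne' h
  · exact hIoo.2.ne h

/-! ### Contracting backward sequences of maps -/

/-- The `k`-fold pull-back `g n (g (n + 1) (⋯ (g (n + k - 1) (c (n + k)))))` of a sequence of base
points `c` by a bi-infinite sequence of maps `g n` from the `(n + 1)`-st to the `n`-th fibre. -/
def pullbackIterate {α : Type*} (g : ℤ → α → α) (c : ℤ → α) : ℕ → ℤ → α
  | 0, n => c n
  | k + 1, n => g n (pullbackIterate g c k (n + 1))

section PullbackIterate

variable {α : Type*} {g : ℤ → α → α} {c : ℤ → α} {I : ℤ → Set α}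

lemma pullbackIterate_mem (hg : ∀ n, MapsTo (g n) (I (n + 1)) (I n)) (hc : ∀ n, c n ∈ I n)
    (k : ℕ) : ∀ n, pullbackIterate g c k n ∈ I n := by
  induction k with
  | zero => exact hc
  | succ k ih => exact fun n => hg n (ih (n + 1))

variable [MetricSpace α] {U : ℤ → ℝ} {L D : ℝ}

lemma dist_pullbackIterate_succ_mul_le (hg : ∀ n, MapsTo (g n) (I (n + 1)) (I n))
    (hc : ∀ n, c n ∈ I n) (hL : 0 ≤ L)
    (hcon : ∀ n, ∀ z ∈ I (n + 1), ∀ z' ∈ I (n + 1),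
      dist (g n z) (g n z') * U n ≤ L * (dist z z' * U (n + 1)))
    (hD : ∀ n, ∀ z ∈ I n, ∀ z' ∈ I n, dist z z' * U n ≤ D) (k : ℕ) :
    ∀ n, dist (pullbackIterate g c k n) (pullbackIterate g c (k + 1) n) * U n ≤ D * L ^ k := by
  have hmem := pullbackIterate_mem hg hc
  induction k with
  | zero => exact fun n => by simpa using hD n _ (hmem 0 n) _ (hmem 1 n)
  | succ k ih =>
    intro n
    calc _ ≤ L * (dist (pullbackIterate g c k (n + 1)) (pullbackIterate g c (k + 1) (n + 1))
          * U (n + 1)) := hcon n _ (hmem k _) _ (hmem (k + 1) _)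
      _ ≤ L * (D * L ^ k) := mul_le_mul_of_nonneg_left (ih (n + 1)) hL
      _ = D * L ^ (k + 1) := by rw [pow_succ]; ring

lemma exists_backward_orbit_of_contracting [CompleteSpace α] (hI : ∀ n, IsClosed (I n))
    (hg : ∀ n, MapsTo (g n) (I (n + 1)) (I n)) (hc : ∀ n, c n ∈ I n) (hL : 0 ≤ L) (hL1 : L < 1)
    (hcon : ∀ n, ∀ z ∈ I (n + 1), ∀ z' ∈ I (n + 1),
      dist (g n z) (g n z') * U n ≤ L * (dist z z' * U (n + 1)))
    (hU : ∀ n, 1 ≤ U n) (hD : ∀ n, ∀ z ∈ I n, ∀ z' ∈ I n, dist z z' * U n ≤ D) :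
    ∃ X : ℤ → α, ∀ n, X n ∈ I n ∧ g n (X (n + 1)) = X n := by
  have hle : ∀ n (z z' : α), dist z z' ≤ dist z z' * U n := fun n _ _ =>
    le_mul_of_one_le_right dist_nonneg (hU n)
  have hcauchy : ∀ n, CauchySeq fun k => pullbackIterate g c k n := fun n =>
    cauchySeq_of_le_geometric L D hL1 fun k =>
      (hle n _ _).trans (dist_pullbackIterate_succ_mul_le hg hc hL hcon hD k n)
  choose X hX using fun n => cauchySeq_tendsto_of_complete (hcauchy n)
  have hmem := pullbackIterate_mem hg hc
  have hXI : ∀ n, X n ∈ I n := fun n =>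
    (hI n).mem_of_tendsto (hX n) (Eventually.of_forall fun k => hmem k n)
  refine ⟨X, fun n => ⟨hXI n, tendsto_nhds_unique ?_ ((tendsto_add_atTop_iff_nat 1).2 (hX n))⟩⟩
  have hnext : Tendsto (fun k => L * (dist (pullbackIterate g c k (n + 1)) (X (n + 1)) * U (n + 1)))
      atTop (𝓝 0) := by
    simpa using ((tendsto_iff_dist_tendsto_zero.1 (hX (n + 1))).mul_const (U (n + 1))).const_mul L
  exact tendsto_iff_dist_tendsto_zero.2 <| squeeze_zero (fun _ => dist_nonneg)
    (fun k => (hle n _ _).trans (hcon n _ (hmem k _) _ (hXI _))) hnext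

end PullbackIterate

/-! ### Hölder continuity for the symbolic metric -/

section Holder

variable {V : Type*} {v w : ℤ → V}

lemma dSigma_nonneg (v w : ℤ → V) : 0 ≤ dSigma v w := by
  refine Real.sSup_nonneg ?_
  rintro _ ⟨n, -, rfl⟩
  exact (Real.exp_pos _).le

lemma exp_neg_abs_le_dSigma {n : ℤ} (h : v n ≠ w n) : Real.exp (-|(n : ℝ)|) ≤ dSigma v w := by
  refine le_csSup ⟨1, ?_⟩ ⟨n, h, rfl⟩
  rintro _ ⟨m, -, rfl⟩
  exact Real.exp_le_one_iff.2 (neg_nonpos.2 (abs_nonneg _))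

lemma exists_first_disagreement (h : v ≠ w) :
    ∃ m, v m ≠ w m ∧ ∀ j : ℤ, j.natAbs < m.natAbs → v j = w j := by
  obtain ⟨m, hm, hmin⟩ := WellFounded.has_min (measure Int.natAbs).wf {m | v m ≠ w m}
    (Function.ne_iff.1 h)
  exact ⟨m, hm, fun j hj => by_contra fun hne => hmin j hne hj⟩

variable {x y : ℤ → ℝ} {θ D : ℝ}

lemma two_zpow_mul_abs_sub_le (hθ : 1 / 2 ≤ θ) (hθ1 : θ ≤ 1) (hD : ∀ n, |x n - y n| ≤ D)
    (hclose : ∀ (n : ℤ) (k : ℕ), (∀ j, n ≤ j → j ≤ n + k → v j = w j) → |x n - y n| ≤ D * θ ^ k)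
    {N : ℕ} (hN : ∀ j : ℤ, j.natAbs < N → v j = w j) {n : ℤ} (hn : n ≤ 0) :
    (2 : ℝ) ^ n * |x n - y n| ≤ D / θ * θ ^ N := by
  obtain ⟨m, rfl⟩ : ∃ m : ℕ, n = -(m : ℤ) := ⟨n.natAbs, by omega⟩
  have hθ0 : 0 < θ := by linarith
  have hD0 : 0 ≤ D := (abs_nonneg _).trans (hD 0)
  have htwo : (2 : ℝ) ^ (-(m : ℤ)) = (1 / 2) ^ m := by
    rw [zpow_neg, zpow_natCast, one_div, inv_pow]
  rw [htwo]
  rcases le_or_gt N m with hNm | hmN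
  · calc (1 / 2 : ℝ) ^ m * |x (-m) - y (-m)| ≤ θ ^ N * D := by
          gcongr
          · exact (pow_le_pow_left₀ (by norm_num) hθ m).trans (pow_le_pow_of_le_one hθ0.le hθ1 hNm)
          · exact hD _
      _ = D * θ ^ N := mul_comm _ _
      _ ≤ D / θ * θ ^ N := by gcongr; exact le_div_self hD0 hθ0 hθ1
  · obtain ⟨k, rfl⟩ : ∃ k, N = k + 1 := ⟨N - 1, by omega⟩
    calc (1 / 2 : ℝ) ^ m * |x (-m) - y (-m)| ≤ 1 * (D * θ ^ (m + k)) := by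
          gcongr
          · exact pow_le_one₀ (by norm_num) (by norm_num)
          · exact hclose _ _ fun j h₁ h₂ => hN j (by push_cast at h₂; omega)
      _ ≤ 1 * (D * θ ^ k) := by
          gcongr 1 * (D * ?_)
          exact pow_le_pow_of_le_one hθ0.le hθ1 (Nat.le_add_left k m)
      _ = D / θ * θ ^ (k + 1) := by rw [pow_succ]; field_simp

lemma dhat_le_mul_dSigma_rpow (hθ : 1 / 2 ≤ θ) (hθ1 : θ < 1) (hD : ∀ n, |x n - y n| ≤ D)
    (hclose : ∀ (n : ℤ) (k : ℕ), (∀ j, n ≤ j → j ≤ n + k → v j = w j) → |x n - y n| ≤ D * θ ^ k) :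
    dhat x y ≤ D / θ * dSigma v w ^ (-Real.log θ) := by
  have hθ0 : 0 < θ := by linarith
  have hD0 : 0 ≤ D := (abs_nonneg _).trans (hD 0)
  have hrhs : 0 ≤ D / θ * dSigma v w ^ (-Real.log θ) :=
    mul_nonneg (by positivity) (Real.rpow_nonneg (dSigma_nonneg v w) _)
  refine Real.sSup_le ?_ hrhs
  rintro _ ⟨n, hn, rfl⟩
  have hbound := fun N hN => two_zpow_mul_abs_sub_le (N := N) hθ hθ1.le hD hclose hN hn
  by_cases hvw : v = w
  · have hlim : Tendsto (fun N : ℕ => D / θ * θ ^ N) atTop (𝓝 0) := by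
      simpa using (tendsto_pow_atTop_nhds_zero_of_lt_one hθ0.le hθ1).const_mul (D / θ)
    exact (ge_of_tendsto' hlim fun N => hbound N fun j _ => congrFun hvw j).trans hrhs
  obtain ⟨m, hm, hmin⟩ := exists_first_disagreement hvw
  refine (hbound m.natAbs hmin).trans (mul_le_mul_of_nonneg_left ?_ (by positivity))
  calc θ ^ m.natAbs = Real.exp (-|(m : ℝ)|) ^ (-Real.log θ) := by
        rw [← Real.exp_mul, neg_mul_neg, ← Int.cast_abs, Int.abs_eq_natAbs, Int.cast_natCast,
          Real.exp_nat_mul, Real.exp_log hθ0]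
    _ ≤ _ := Real.rpow_le_rpow (Real.exp_pos _).le (exp_neg_abs_le_dSigma hm)
        (neg_nonneg.2 (Real.log_nonpos hθ0.le hθ1.le))

end Holder

/-! ### The natural extension and the Pesin parameter -/

section NaturalExtension

variable {f : ℝ → ℝ} {x : ℤ → ℝ}

lemma fhatI_fhatI (a b : ℤ) (x : ℤ → ℝ) : fhatI a (fhatI b x) = fhatI (a + b) x := by
  funext n
  simp only [fhatI, add_assoc]

lemma fhatI_zero (x : ℤ → ℝ) : fhatI 0 x = x := by
  funext n
  simp only [fhatI, add_zero]

lemma inMhat.apply_eq (h : inMhat f x) (n : ℤ) : f (x n) = x (n + 1) := by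
  simpa using h.2 (n + 1)

lemma inMhat.shift (h : inMhat f x) (k : ℤ) : inMhat f (fhatI k x) :=
  ⟨fun n => h.1 (n + k), fun n => by simpa [fhatI, sub_add_eq_add_sub] using h.2 (n + k)⟩

lemma inMhat_fhatI_iff {k : ℤ} : inMhat f (fhatI k x) ↔ inMhat f x :=
  ⟨fun h => by simpa [fhatI_fhatI, fhatI_zero] using h.shift (-k), fun h => h.shift k⟩

lemma dfhat_natCast (f : ℝ → ℝ) (x : ℤ → ℝ) (n : ℕ) :
    dfhat f x n = ∏ j ∈ Finset.range n, deriv f (x j) := by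
  simp [dfhat]

lemma dfhat_neg_natCast (f : ℝ → ℝ) (x : ℤ → ℝ) (n : ℕ) :
    dfhat f x (-n) = (∏ j ∈ Finset.range n, deriv f (x (-j - 1)))⁻¹ := by
  rcases n.eq_zero_or_pos with rfl | h
  · simp [dfhat]
  · rw [dfhat, if_neg (by omega)]
    simp

lemma dfhat_neg_natCast_succ (f : ℝ → ℝ) (x : ℤ → ℝ) (n : ℕ) :
    dfhat f x (-(n + 1 : ℕ)) = (deriv f (x (-1)))⁻¹ * dfhat f (fhatI (-1) x) (-n) := by
  rw [dfhat_neg_natCast, dfhat_neg_natCast, Finset.prod_range_succ', mul_inv, mul_comm]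
  simp only [fhatI, Nat.cast_add, Nat.cast_one, Nat.cast_zero, neg_add', sub_eq_add_neg, neg_zero,
    zero_add]

end NaturalExtension

section NUE

variable {F : GoodMap} {χ : ℝ} {x : ℤ → ℝ}

lemma deriv_ne_zero_of_notMem_S {y : ℝ} (hM : y ∈ Mset) (hS : y ∉ F.S) : deriv F.f y ≠ 0 :=
  fun h => hS (Or.inl ⟨⟨hM, fun hD => hS (Or.inr hD)⟩, h⟩)

lemma log_abs_dfhat_natCast (hne : ∀ n, deriv F.f (x n) ≠ 0) (n : ℕ) :
    Real.log |dfhat F.f x n| = ∑ j ∈ Finset.range n, Real.log |deriv F.f (x j)| := by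
  rw [dfhat_natCast, Finset.abs_prod, Real.log_prod]
  exact fun j _ => abs_ne_zero.2 (hne _)

lemma log_abs_dfhat_neg_natCast (hne : ∀ n, deriv F.f (x n) ≠ 0) (n : ℕ) :
    Real.log |dfhat F.f x (-n)| = -∑ j ∈ Finset.range n, Real.log |deriv F.f (x (-j - 1))| := by
  rw [dfhat_neg_natCast, abs_inv, Real.log_inv, Finset.abs_prod, Real.log_prod]
  exact fun j _ => abs_ne_zero.2 (hne _)

lemma mem_NUE_iff : x ∈ NUE F χ ↔ inMhat F.f x ∧ (∀ n, x n ∉ F.S) ∧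
    (∃ l > χ, Tendsto (fun n : ℕ => (∑ j ∈ Finset.range n, Real.log |deriv F.f (x j)|) / n)
      atTop (𝓝 l)) ∧
    ∃ l > χ, Tendsto (fun n : ℕ => (∑ j ∈ Finset.range n, Real.log |deriv F.f (x (-j - 1))|) / n)
      atTop (𝓝 l) := by
  refine and_congr_right fun hM => and_congr_right fun hS => ?_
  have hne := fun n => deriv_ne_zero_of_notMem_S (hM.1 n) (hS n)
  simp only [log_abs_dfhat_natCast hne, log_abs_dfhat_neg_natCast hne, neg_div_neg_eq]

lemma fhatI_one_mem_NUE_iff : fhatI 1 x ∈ NUE F χ ↔ x ∈ NUE F χ := by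
  rw [mem_NUE_iff, mem_NUE_iff, inMhat_fhatI_iff]
  refine and_congr_right' (and_congr
    ((Equiv.addRight (1 : ℤ)).forall_congr_right (q := fun n => x n ∉ F.S)) (and_congr ?_ ?_))
  · simpa [fhatI] using exists_congr fun l => and_congr_right' <|
      tendsto_average_succ_iff (u := fun j => Real.log |deriv F.f (x j)|) (l := l)
  · simpa [fhatI, ← sub_eq_neg_add, neg_add_eq_sub] using exists_congr fun l => and_congr_right' <|
      (tendsto_average_succ_iff (u := fun j => Real.log |deriv F.f (x (-j))|) (l := l)).symm

lemma fhatI_mem_NUE (h : x ∈ NUE F χ) (k : ℤ) : fhatI k x ∈ NUE F χ := by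
  induction k using Int.induction_on with
  | zero => rwa [fhatI_zero]
  | succ i ih => rwa [add_comm, ← fhatI_fhatI, fhatI_one_mem_NUE_iff]
  | pred i ih => rwa [← fhatI_one_mem_NUE_iff, fhatI_fhatI, add_sub_cancel]

lemma deriv_ne_zero_of_mem_NUE (h : x ∈ NUE F χ) (n : ℤ) : deriv F.f (x n) ≠ 0 :=
  deriv_ne_zero_of_notMem_S (h.1.1 n) (h.2.1 n)

lemma eventually_abs_dfhat_neg_le (h : x ∈ NUE F χ) :
    ∃ κ > χ, ∀ᶠ n : ℕ in atTop, |dfhat F.f x (-n)| ≤ Real.exp (-(κ * n)) := by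
  obtain ⟨l, hl, hlim⟩ := h.2.2.2
  obtain ⟨κ, hχκ, hκl⟩ := exists_between hl
  refine ⟨κ, hχκ, ?_⟩
  filter_upwards [hlim.eventually (lt_mem_nhds hκl), eventually_gt_atTop 0] with n hn hn0
  rw [div_neg, lt_neg, div_lt_iff₀ (Nat.cast_pos.2 hn0), neg_mul] at hn
  have hpos : 0 < |dfhat F.f x (-n)| := by
    rw [dfhat_neg_natCast, abs_pos]
    exact inv_ne_zero (Finset.prod_ne_zero_iff.2 fun j _ => deriv_ne_zero_of_mem_NUE h _)
  exact (Real.log_le_iff_le_exp hpos).1 hn.le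

lemma summable_uPes (h : x ∈ NUE F χ) :
    Summable fun n : ℕ => Real.exp (2 * n * χ) * dfhat F.f x (-n) ^ 2 := by
  obtain ⟨κ, hκ, hbound⟩ := eventually_abs_dfhat_neg_le h
  have hgeom : Summable fun n : ℕ => Real.exp (-2 * (κ - χ)) ^ n :=
    summable_geometric_of_lt_one (Real.exp_pos _).le (Real.exp_lt_one_iff.2 (by linarith))
  refine hgeom.of_norm_bounded_eventually_nat ?_
  filter_upwards [hbound] with n hn
  rw [Real.norm_of_nonneg (by positivity), ← sq_abs]
  calc Real.exp (2 * n * χ) * |dfhat F.f x (-n)| ^ 2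
      ≤ Real.exp (2 * n * χ) * Real.exp (-(κ * n)) ^ 2 := by gcongr
    _ = Real.exp (-2 * (κ - χ)) ^ n := by
        rw [← Real.exp_nat_mul, ← Real.exp_add, ← Real.exp_nat_mul]
        congr 1
        push_cast
        ring

lemma uPes_nonneg (f : ℝ → ℝ) (χ : ℝ) (x : ℤ → ℝ) : 0 ≤ uPes f χ x := Real.sqrt_nonneg _

lemma uPes_sq (h : x ∈ NUE F χ) : uPes F.f χ x ^ 2 =
    1 + (Real.exp χ * |(deriv F.f (x (-1)))⁻¹| * uPes F.f χ (fhatI (-1) x)) ^ 2 := by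
  rw [uPes, uPes, mul_pow, Real.sq_sqrt (tsum_nonneg fun n => by positivity),
    Real.sq_sqrt (tsum_nonneg fun n => by positivity), (summable_uPes h).tsum_eq_zero_add,
    ← tsum_mul_left]
  congr 1
  · simp [dfhat]
  · congr 1
    funext n
    have hexp : Real.exp (2 * (n + 1 : ℕ) * χ) = Real.exp χ ^ 2 * Real.exp (2 * n * χ) := by
      rw [← Real.exp_nat_mul, ← Real.exp_add]
      congr 1
      push_cast
      ring
    rw [dfhat_neg_natCast_succ, hexp, mul_pow _ |_|, sq_abs]
    ring

lemma one_le_uPes (h : x ∈ NUE F χ) : 1 ≤ uPes F.f χ x := by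
  rw [← one_le_sq_iff₀ (uPes_nonneg _ _ _), uPes_sq h]
  exact le_add_of_nonneg_right (sq_nonneg _)

lemma uPes_pos (h : x ∈ NUE F χ) : 0 < uPes F.f χ x := zero_lt_one.trans_le (one_le_uPes h)

lemma abs_inv_deriv_mul_uPes_le (h : x ∈ NUE F χ) :
    |(deriv F.f (x (-1)))⁻¹| * uPes F.f χ (fhatI (-1) x) ≤ Real.exp (-χ) * uPes F.f χ x := by
  have hle := le_of_sq_le_sq ((le_add_of_nonneg_left zero_le_one).trans_eq (uPes_sq h).symm)
    (uPes_nonneg F.f χ x)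
  rwa [Real.exp_neg, inv_mul_eq_div, le_div_iff₀' (Real.exp_pos χ), ← mul_assoc]

lemma uPes_le_one_add (h : x ∈ NUE F χ) :
    uPes F.f χ x ≤ 1 + Real.exp χ * |(deriv F.f (x (-1)))⁻¹| * uPes F.f χ (fhatI (-1) x) := by
  have hnonneg : 0 ≤ Real.exp χ * |(deriv F.f (x (-1)))⁻¹| * uPes F.f χ (fhatI (-1) x) :=
    mul_nonneg (by positivity) (uPes_nonneg _ _ _)
  refine le_of_sq_le_sq ?_ (by positivity)
  rw [uPes_sq h, add_sq]
  linarith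

end NUE

/-! ### The singular set and the inverse branches -/

lemma abs_sub_le_half_of_mem_Mset {s t : ℝ} (hs : s ∈ Mset) (ht : t ∈ Mset) : |s - t| ≤ 1 / 2 := by
  simpa using abs_sub_le_of_le_of_le hs.1 hs.2 ht.1 ht.2

lemma S_subset_Mset (F : GoodMap) : F.S ⊆ Mset :=
  union_subset (fun _ hx => hx.1.1) F.hD

lemma dS_nonneg (F : GoodMap) (s : ℝ) : 0 ≤ F.dS s := infDist_nonneg

lemma dS_le_half (F : GoodMap) {s : ℝ} (hs : s ∈ Mset) : F.dS s ≤ 1 / 2 := by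
  rcases F.S.eq_empty_or_nonempty with h | ⟨t, ht⟩
  · rw [GoodMap.dS, h, infDist_empty]
    norm_num
  · exact (infDist_le_dist_of_mem ht).trans (abs_sub_le_half_of_mem_Mset hs (S_subset_Mset F ht))

lemma dS_sub_abs_sub_le (F : GoodMap) (s t : ℝ) : F.dS s - |s - t| ≤ F.dS t :=
  sub_le_iff_le_add.2 infDist_le_infDist_add_dist

/-- The consequences of (A1)–(A3) at the point `x₋₁`, phrased for the branch `g_{x̂} = ghat F x` of
the inverse of `f` that maps `x₀` to `x₋₁`. -/
structure IsInverseBranch (F : GoodMap) (x : ℤ → ℝ) : Prop where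
  min_dS_rpow_lt_r : min (F.dS (x (-1)) ^ F.a) (F.dS (x 0) ^ F.a) < F.r (x (-1))
  injOn : InjOn F.f (ball (x (-1)) (2 * F.r (x (-1))))
  differentiableAt : ∀ y ∈ ball (x (-1)) (2 * F.r (x (-1))), DifferentiableAt ℝ F.f y
  ghat_apply_zero : ghat F x (x 0) = x (-1)
  apply_ghat : ∀ z ∈ ball (x 0) (2 * F.r (x (-1))), F.f (ghat F x z) = z
  differentiableAt_ghat : ∀ z ∈ ball (x 0) (2 * F.r (x (-1))), DifferentiableAt ℝ (ghat F x) z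
  dS_rpow_le_abs_deriv : F.dS (x (-1)) ^ F.a ≤ |deriv F.f (x (-1))|
  abs_deriv_le_dS_rpow_neg : |deriv F.f (x (-1))| ≤ F.dS (x (-1)) ^ (-F.a)
  abs_deriv_ghat_sub_le : ∀ y ∈ ball (x 0) (2 * F.r (x (-1))),
    ∀ z ∈ ball (x 0) (2 * F.r (x (-1))),
      |deriv (ghat F x) y - deriv (ghat F x) z| ≤ F.K * |y - z| ^ F.β

section InverseBranch

variable {F : GoodMap} {χ : ℝ} {x : ℤ → ℝ}

lemma IsInverseBranch.r_pos (hb : IsInverseBranch F x) : 0 < F.r (x (-1)) :=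
  (le_min (Real.rpow_nonneg (dS_nonneg F _) _) (Real.rpow_nonneg (dS_nonneg F _) _)).trans_lt
    hb.min_dS_rpow_lt_r

lemma isInverseBranch (hA : F.SatA) (hx : x ∈ NUE F χ) : IsInverseBranch F x := by
  have hfx : F.f (x (-1)) = x 0 := by simpa using hx.1.apply_eq (-1)
  obtain ⟨⟨hr, -⟩, ⟨hinj, hdf, hg, hfg, -, hdg⟩, ⟨hdf', -⟩, -, hdg'⟩ :=
    hA (x (-1)) (hx.1.1 _) (hx.2.1 _) (hfx ▸ hx.2.1 0)
  rw [hfx] at hr hg hfg hdg hdg'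
  have hr0 := (le_min (Real.rpow_nonneg (dS_nonneg F _) _)
    (Real.rpow_nonneg (dS_nonneg F _) _)).trans_lt hr
  have hbound := hdf' (x (-1)) (mem_ball_self (by linarith))
  exact ⟨hr, hinj, hdf, hg, hfg, hdg, hbound.1, hbound.2, hdg'⟩

lemma IsInverseBranch.rpow_lt_r (hb : IsInverseBranch F x) {s : ℝ} (hs : 0 ≤ s)
    (hs₁ : s ≤ F.dS (x (-1))) (hs₀ : s ≤ F.dS (x 0)) : s ^ F.a < F.r (x (-1)) := by
  have ha : 0 ≤ F.a := zero_le_one.trans F.ha.le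
  exact (le_min (Real.rpow_le_rpow hs hs₁ ha) (Real.rpow_le_rpow hs hs₀ ha)).trans_lt
    hb.min_dS_rpow_lt_r

lemma IsInverseBranch.deriv_ghat (hb : IsInverseBranch F x) :
    deriv (ghat F x) (x 0) = (deriv F.f (x (-1)))⁻¹ := by
  have hR : 0 < 2 * F.r (x (-1)) := by linarith [hb.r_pos]
  have hf : HasDerivAt F.f (deriv F.f (x (-1))) (ghat F x (x 0)) :=
    hb.ghat_apply_zero ▸ (hb.differentiableAt _ (mem_ball_self hR)).hasDerivAt
  have hcomp := hf.comp (x 0) (hb.differentiableAt_ghat _ (mem_ball_self hR)).hasDerivAt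
  have hid : HasDerivAt (F.f ∘ ghat F x) 1 (x 0) :=
    (hasDerivAt_id (x 0)).congr_of_eventuallyEq
      (eventually_of_mem (ball_mem_nhds (x 0) hR) hb.apply_ghat)
  exact eq_inv_of_mul_eq_one_right (hcomp.unique hid)

lemma dS_pos (hA : F.SatA) (hx : x ∈ NUE F χ) (n : ℤ) : 0 < F.dS (x n) := by
  have hle : |deriv F.f (x n)| ≤ F.dS (x n) ^ (-F.a) := by
    simpa [fhatI] using (isInverseBranch hA (fhatI_mem_NUE hx (n + 1))).abs_deriv_le_dS_rpow_neg
  refine (dS_nonneg F _).lt_of_ne fun h => ?_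
  -- For real powers `0 ^ (-a) = 0` when `a ≠ 0`, so `d(x, S) = 0` forces `df_x = 0`.
  rw [← h, Real.zero_rpow (neg_ne_zero.2 (zero_lt_one.trans F.ha).ne')] at hle
  exact deriv_ne_zero_of_mem_NUE hx n (abs_nonpos_iff.1 hle)

lemma rho_pos (hA : F.SatA) (hx : x ∈ NUE F χ) : 0 < rho F x :=
  lt_min (dS_pos hA hx _) (lt_min (dS_pos hA hx _) (dS_pos hA hx _))

lemma rho_le_half (hx : x ∈ NUE F χ) : rho F x ≤ 1 / 2 :=
  (min_le_left _ _).trans (dS_le_half F (hx.1.1 _))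

lemma rho_le_dS_neg_one (F : GoodMap) (x : ℤ → ℝ) : rho F x ≤ F.dS (x (-1)) := min_le_left _ _

lemma rho_le_dS_zero (F : GoodMap) (x : ℤ → ℝ) : rho F x ≤ F.dS (x 0) :=
  (min_le_right _ _).trans (min_le_left _ _)

lemma rho_le_dS_one (F : GoodMap) (x : ℤ → ℝ) : rho F x ≤ F.dS (x 1) :=
  (min_le_right _ _).trans (min_le_right _ _)

end InverseBranch

/-! ### The size of a Pesin chart -/

section ChartSize

variable {F : GoodMap} {χ ε : ℝ} {x : ℤ → ℝ}

lemma exists_isGreatest_range_of_antitone_tendsto {e : ℕ → ℝ} (he : Antitone e)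
    (hlim : Tendsto e atTop (𝓝 0)) {t : ℝ} (ht : 0 < t) :
    ∃ k, IsGreatest {q | q ∈ range e ∧ q ≤ t} (e k) := by
  have hex : ∃ k, e k ≤ t := ((hlim.eventually (gt_mem_nhds ht)).mono fun _ h => h.le).exists
  classical
  refine ⟨Nat.find hex, ⟨⟨_, rfl⟩, Nat.find_spec hex⟩, ?_⟩
  rintro _ ⟨⟨n, rfl⟩, hn⟩
  exact he (Nat.find_min' hex hn)

lemma exp_neg_mul_div_three (ε : ℝ) (n : ℕ) :
    Real.exp (-(ε * n) / 3) = Real.exp (-ε / 3) ^ n := by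
  rw [← Real.exp_nat_mul]
  congr 1
  ring

lemma Qtilde_pos (hA : F.SatA) (hε : 0 < ε) (hx : x ∈ NUE F χ) : 0 < Qtilde F χ ε x :=
  mul_pos (Real.rpow_pos_of_pos hε _) (lt_min (Real.rpow_pos_of_pos (uPes_pos hx) _)
    (mul_pos (Real.rpow_pos_of_pos (uPes_pos (fhatI_mem_NUE hx _)) _)
      (Real.rpow_pos_of_pos (rho_pos hA hx) _)))

lemma exists_Qeps_isGreatest (hA : F.SatA) (hε : 0 < ε) (hx : x ∈ NUE F χ) :
    ∃ k : ℕ, Qeps F χ ε x = Real.exp (-(ε * k) / 3) ∧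
      IsGreatest {q | q ∈ Ieps ε ∧ q ≤ Qtilde F χ ε x} (Qeps F χ ε x) := by
  have hexp : Real.exp (-ε / 3) < 1 := Real.exp_lt_one_iff.2 (by linarith)
  obtain ⟨k, hk⟩ := exists_isGreatest_range_of_antitone_tendsto
    (e := fun n => Real.exp (-ε / 3) ^ n)
    (pow_right_anti₀ (Real.exp_pos _).le hexp.le)
    (tendsto_pow_atTop_nhds_zero_of_lt_one (Real.exp_pos _).le hexp) (Qtilde_pos hA hε hx)
  have hIeps : Ieps ε = range fun n : ℕ => Real.exp (-ε / 3) ^ n := by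
    ext q
    simp only [Ieps, exp_neg_mul_div_three, mem_range, Set.mem_ofPred_eq, eq_comm]
  rw [Qeps, hIeps, hk.csSup_eq]
  exact ⟨k, (exp_neg_mul_div_three ε k).symm, hk⟩

lemma Qeps_le_Qtilde (hA : F.SatA) (hε : 0 < ε) (hx : x ∈ NUE F χ) :
    Qeps F χ ε x ≤ Qtilde F χ ε x :=
  let ⟨_, _, h⟩ := exists_Qeps_isGreatest hA hε hx
  h.1.2

lemma Qeps_pos (hA : F.SatA) (hε : 0 < ε) (hx : x ∈ NUE F χ) : 0 < Qeps F χ ε x :=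
  let ⟨_, h, _⟩ := exists_Qeps_isGreatest hA hε hx
  h ▸ Real.exp_pos _

lemma rpow_neg_le_inv {u s : ℝ} (hu : 1 ≤ u) (hs : 1 ≤ s) : u ^ (-s) ≤ u⁻¹ := by
  rw [← Real.rpow_neg_one]
  exact Real.rpow_le_rpow_of_exponent_le hu (neg_le_neg hs)

lemma one_le_div_β (F : GoodMap) {c : ℝ} (hc : 1 ≤ c) : 1 ≤ c / F.β :=
  (one_le_div F.hβ0).2 (F.hβ1.le.trans hc)

lemma Qeps_mul_uPes_le (hA : F.SatA) (hε : 0 < ε) (hε1 : ε ≤ 1) (hx : x ∈ NUE F χ) :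
    Qeps F χ ε x * uPes F.f χ x ≤ ε := by
  rw [← le_div_iff₀ (uPes_pos hx), div_eq_mul_inv]
  refine (Qeps_le_Qtilde hA hε hx).trans (mul_le_mul ?_ ?_ ?_ hε.le)
  · exact Real.rpow_le_self_of_le_one hε.le hε1 (one_le_div_β F (by norm_num))
  · exact (min_le_left _ _).trans
      (rpow_neg_le_inv (one_le_uPes hx) (one_le_div_β F (by norm_num)))
  · exact le_min (Real.rpow_nonneg (uPes_nonneg _ _ _) _) (mul_nonneg
      (Real.rpow_nonneg (uPes_nonneg _ _ _) _) (Real.rpow_nonneg (rho_pos hA hx).le _))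

lemma Qeps_le (hA : F.SatA) (hε : 0 < ε) (hε1 : ε ≤ 1) (hx : x ∈ NUE F χ) : Qeps F χ ε x ≤ ε :=
  (le_mul_of_one_le_right (Qeps_pos hA hε hx).le (one_le_uPes hx)).trans
    (Qeps_mul_uPes_le hA hε hε1 hx)

lemma Qeps_rpow_mul_uPes_le (hA : F.SatA) (hε : 0 < ε) (hε1 : ε ≤ 1) (hx : x ∈ NUE F χ) :
    Qeps F χ ε x ^ F.β * uPes F.f χ (fhatI (-1) x) ≤ ε := by
  have hβ := F.hβ0
  have hu := one_le_uPes (fhatI_mem_NUE hx (-1))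
  set u := uPes F.f χ (fhatI (-1) x)
  have hu0 : 0 < u := zero_lt_one.trans_le hu
  have hρ := rho_pos hA hx
  have ha := F.ha
  have hQ : Qeps F χ ε x ≤ ε ^ (3 / F.β) * u ^ (-(12 / F.β)) := by
    refine (Qeps_le_Qtilde hA hε hx).trans (mul_le_mul_of_nonneg_left ?_ (by positivity))
    refine (min_le_right _ _).trans (mul_le_of_le_one_right (by positivity) ?_)
    exact Real.rpow_le_one hρ.le (by linarith [rho_le_half hx]) (by positivity)
  rw [← le_div_iff₀ hu0, div_eq_mul_inv]
  calc Qeps F χ ε x ^ F.β ≤ (ε ^ (3 / F.β) * u ^ (-(12 / F.β))) ^ F.β :=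
        Real.rpow_le_rpow (Qeps_pos hA hε hx).le hQ hβ.le
    _ = ε ^ (3 : ℝ) * u ^ (-12 : ℝ) := by
        rw [Real.mul_rpow (by positivity) (by positivity), ← Real.rpow_mul hε.le,
          ← Real.rpow_mul hu0.le, neg_mul, div_mul_cancel₀ _ hβ.ne', div_mul_cancel₀ _ hβ.ne']
    _ ≤ ε * u⁻¹ := mul_le_mul (Real.rpow_le_self_of_le_one hε.le hε1 (by norm_num))
        (rpow_neg_le_inv hu (by norm_num)) (by positivity) hε.le

lemma Qeps_le_mul_rho_rpow (hA : F.SatA) (hε : 0 < ε) (hε1 : ε ≤ 1) (hx : x ∈ NUE F χ) :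
    Qeps F χ ε x ≤ ε * (rho F x / 2) ^ F.a := by
  have hβ := F.hβ0
  have ha := F.ha
  have hρ := rho_pos hA hx
  have hρ2 := rho_le_half hx
  have hu := one_le_uPes (fhatI_mem_NUE hx (-1))
  refine (Qeps_le_Qtilde hA hε hx).trans (mul_le_mul ?_ ?_ ?_ hε.le)
  · exact Real.rpow_le_self_of_le_one hε.le hε1 (one_le_div_β F (by norm_num))
  · calc _ ≤ uPes F.f χ (fhatI (-1) x) ^ (-(12 / F.β)) * rho F x ^ (72 * F.a / F.β) :=
          min_le_right _ _
      _ ≤ rho F x ^ (72 * F.a / F.β) := mul_le_of_le_one_left (by positivity)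
          (Real.rpow_le_one_of_one_le_of_nonpos hu (neg_nonpos.2 (by positivity)))
      _ ≤ rho F x ^ (2 * F.a) := by
          refine Real.rpow_le_rpow_of_exponent_ge hρ (by linarith) ?_
          rw [le_div_iff₀ hβ]
          nlinarith [F.hβ1]
      _ = (rho F x ^ 2) ^ F.a := by rw [Real.rpow_mul hρ.le, Real.rpow_two]
      _ ≤ (rho F x / 2) ^ F.a := Real.rpow_le_rpow (by positivity) (by nlinarith) (by linarith)
  · exact le_min (Real.rpow_nonneg (uPes_nonneg _ _ _) _) (by positivity)

lemma Qeps_le_rho_rpow (hA : F.SatA) (hε : 0 < ε) (hε1 : ε ≤ 1) (hx : x ∈ NUE F χ) :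
    Qeps F χ ε x ≤ (rho F x / 2) ^ F.a :=
  (Qeps_le_mul_rho_rpow hA hε hε1 hx).trans
    (mul_le_of_le_one_left (Real.rpow_nonneg (half_pos (rho_pos hA hx)).le _) hε1)

lemma Qeps_le_half_rho (hA : F.SatA) (hε : 0 < ε) (hε1 : ε ≤ 1) (hx : x ∈ NUE F χ) :
    Qeps F χ ε x ≤ rho F x / 2 :=
  (Qeps_le_rho_rpow hA hε hε1 hx).trans <| Real.rpow_le_self_of_le_one
    (half_pos (rho_pos hA hx)).le (by linarith [rho_le_half hx]) F.ha.le

lemma Qeps_lt_r (hA : F.SatA) (hε : 0 < ε) (hε1 : ε ≤ 1) (hx : x ∈ NUE F χ) :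
    Qeps F χ ε x < F.r (x (-1)) := by
  have hρ := rho_pos hA hx
  exact (Qeps_le_rho_rpow hA hε hε1 hx).trans_lt <| (isInverseBranch hA hx).rpow_lt_r
    (half_pos hρ).le ((half_le_self hρ.le).trans (rho_le_dS_neg_one F x))
    ((half_le_self hρ.le).trans (rho_le_dS_zero F x))

lemma Qeps_le_abs_deriv (hA : F.SatA) (hε : 0 < ε) (hε1 : ε ≤ 1) (hx : x ∈ NUE F χ) :
    Qeps F χ ε x ≤ |deriv F.f (x 0)| := by
  have hρ := rho_pos hA hx
  calc Qeps F χ ε x ≤ (rho F x / 2) ^ F.a := Qeps_le_rho_rpow hA hε hε1 hx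
    _ ≤ F.dS (x 0) ^ F.a := Real.rpow_le_rpow (half_pos hρ).le
        ((half_le_self hρ.le).trans (rho_le_dS_zero F x)) (zero_le_one.trans F.ha.le)
    _ ≤ |deriv F.f (x 0)| := by
        simpa [fhatI] using (isInverseBranch hA (fhatI_mem_NUE hx 1)).dS_rpow_le_abs_deriv

lemma uPes_le_inv_Qeps (hA : F.SatA) (hε : 0 < ε) (hε1 : ε ≤ 1) (hx : x ∈ NUE F χ) :
    uPes F.f χ x ≤ (Qeps F χ ε x)⁻¹ := by
  rw [← one_div, le_div_iff₀' (Qeps_pos hA hε hx)]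
  exact (Qeps_mul_uPes_le hA hε hε1 hx).trans hε1

end ChartSize

/-! ### Edges contract and preserve chart domains -/

/-- The smallness of `ε` needed for the inverse branch along an edge to be a contraction that maps
chart domains into chart domains (`contracting`, `mapsTo`), and for the orbit data of nearby points
to determine their charts (`exp_pow_eight_lt`). -/
structure IsSmall (F : GoodMap) (χ ε : ℝ) : Prop where
  pos : 0 < ε
  lt_quarter : ε < 1 / 4
  contracting : (1 + ε) * (Real.exp (-χ) + F.K * ε) < Real.exp (-χ / 2)
  mapsTo : ε + Real.exp ε * Real.exp (-χ / 2) < 1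
  exp_pow_eight_lt : Real.exp ε ^ 8 < 2

lemma exists_forall_isSmall (F : GoodMap) {χ : ℝ} (hχ : 0 < χ) :
    ∃ ε₀ > 0, ∀ ε, 0 < ε → ε < ε₀ → IsSmall F χ ε := by
  have eventually_lt {φ : ℝ → ℝ} {b : ℝ} (hφ : Continuous φ) (h0 : φ 0 < b) :
      ∀ᶠ ε in 𝓝 0, φ ε < b := hφ.continuousAt.eventually (gt_mem_nhds h0)
  have hquarter : ∀ᶠ ε in 𝓝 (0 : ℝ), ε < 1 / 4 := gt_mem_nhds (by norm_num)
  have hcon := eventually_lt (φ := fun ε => (1 + ε) * (Real.exp (-χ) + F.K * ε))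
    (b := Real.exp (-χ / 2)) (by fun_prop) (by simpa using by linarith)
  have hmaps := eventually_lt (φ := fun ε => ε + Real.exp ε * Real.exp (-χ / 2)) (b := 1)
    (by fun_prop) (by simpa using by linarith)
  have hexp := eventually_lt (φ := fun ε => Real.exp ε ^ 8) (b := 2) (by fun_prop) (by simp)
  obtain ⟨ε₀, hε₀, h⟩ := Metric.eventually_nhds_iff.1 (hquarter.and (hcon.and (hmaps.and hexp)))
  refine ⟨ε₀, hε₀, fun ε hε hlt => ?_⟩
  obtain ⟨h₁, h₂, h₃, h₄⟩ := h (y := ε) (by rwa [Real.dist_eq, sub_zero, abs_of_pos hε])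
  exact ⟨hε, h₁, h₂, h₃, h₄⟩

lemma exp_neg_half_lt_one {χ : ℝ} (hχ : 0 < χ) : Real.exp (-χ / 2) < 1 :=
  Real.exp_lt_one_iff.2 (by linarith)

lemma IsSmall.le_one {F : GoodMap} {χ ε : ℝ} (hs : IsSmall F χ ε) : ε ≤ 1 := by
  linarith [hs.lt_quarter]

lemma deltaEps_pos (ε : ℝ) : 0 < deltaEps ε := Real.exp_pos _

lemma deltaEps_le_one {ε : ℝ} (hε : 0 < ε) (hε1 : ε ≤ 1) : deltaEps ε ≤ 1 := by
  have hlog : 0 ≤ Real.log (1 / ε) / ε :=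
    div_nonneg (Real.log_nonneg ((one_le_div hε).2 hε1)) hε.le
  have hfloor : 0 ≤ ⌊Real.log (1 / ε) / ε⌋ + 1 := add_nonneg (Int.floor_nonneg.2 hlog) zero_le_one
  rw [deltaEps, Real.exp_le_one_iff, neg_nonpos]
  exact mul_nonneg hε.le (Int.cast_nonneg hfloor)

section ChartRange

variable {F : GoodMap} {χ ε : ℝ} {c : Chart} {z z' : ℝ}

lemma mem_chartRange_iff (hc : c.x ∈ NUE F χ) :
    z ∈ chartRange F χ c ↔ |z - c.x 0| * uPes F.f χ c.x ≤ c.p := by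
  have hu := uPes_pos hc
  rw [← abs_of_pos hu, ← abs_mul, abs_le]
  constructor
  · rintro ⟨t, ht, rfl⟩
    rwa [Psi, add_sub_cancel_right, div_mul_cancel₀ _ hu.ne']
  · exact fun h => ⟨_, h, by rw [Psi, mul_div_cancel_right₀ _ hu.ne', sub_add_cancel]⟩

lemma chartRange_eq_closedBall (hc : c.x ∈ NUE F χ) :
    chartRange F χ c = closedBall (c.x 0) (c.p / uPes F.f χ c.x) := by
  ext z
  rw [mem_chartRange_iff hc, mem_closedBall, Real.dist_eq, le_div_iff₀ (uPes_pos hc)]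

lemma center_mem_chartRange (hc : c.x ∈ NUE F χ) (hp : 0 ≤ c.p) : c.x 0 ∈ chartRange F χ c := by
  simpa [mem_chartRange_iff hc] using hp

lemma abs_sub_center_le (hc : c.x ∈ NUE F χ) (hz : z ∈ chartRange F χ c) :
    |z - c.x 0| ≤ c.p :=
  (le_mul_of_one_le_right (abs_nonneg _) (one_le_uPes hc)).trans ((mem_chartRange_iff hc).1 hz)

lemma abs_sub_mul_uPes_le (hc : c.x ∈ NUE F χ) (hz : z ∈ chartRange F χ c)
    (hz' : z' ∈ chartRange F χ c) : |z - z'| * uPes F.f χ c.x ≤ 2 * c.p := by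
  have h := (mem_chartRange_iff hc).1 hz
  have h' := (mem_chartRange_iff hc).1 hz'
  rw [abs_sub_comm] at h'
  have htri := mul_le_mul_of_nonneg_right (abs_sub_le z (c.x 0) z') (uPes_nonneg F.f χ c.x)
  linarith

lemma IsChart.chartRange_subset_ball (hA : F.SatA) (hε : 0 < ε) (hε1 : ε ≤ 1)
    (hc : IsChart F χ ε c) : chartRange F χ c ⊆ ball (c.x 0) (2 * F.r (c.x (-1))) := fun z hz => by
  have hr := Qeps_lt_r hA hε hε1 hc.1
  have hQ := hc.2.2
  rw [mem_ball, Real.dist_eq]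
  linarith [abs_sub_center_le hc.1 hz, hc.2.1]

lemma IsChart.abs_deriv_ghat_le (hA : F.SatA) (hε : 0 < ε) (hε1 : ε ≤ 1) (hc : IsChart F χ ε c)
    (hz : z ∈ chartRange F χ c) :
    |deriv (ghat F c.x) z| ≤ |(deriv F.f (c.x (-1)))⁻¹| + F.K * Qeps F χ ε c.x ^ F.β := by
  have hb := isInverseBranch hA hc.1
  have hsub := hc.chartRange_subset_ball hA hε hε1
  have hHölder := hb.abs_deriv_ghat_sub_le z (hsub hz) (c.x 0)
    (hsub (center_mem_chartRange hc.1 hc.2.1.le))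
  rw [hb.deriv_ghat] at hHölder
  have hpow : |z - c.x 0| ^ F.β ≤ Qeps F χ ε c.x ^ F.β := Real.rpow_le_rpow (abs_nonneg _)
    ((abs_sub_center_le hc.1 hz).trans hc.2.2) F.hβ0.le
  have htri := abs_sub_abs_le_abs_sub (deriv (ghat F c.x) z) (deriv F.f (c.x (-1)))⁻¹
  linarith [mul_le_mul_of_nonneg_left hpow (zero_le_one.trans F.hK.le)]

lemma IsChart.abs_ghat_sub_mul_uPes_le (hA : F.SatA) (hε : 0 < ε) (hε1 : ε ≤ 1)
    (hc : IsChart F χ ε c) (hz : z ∈ chartRange F χ c) (hz' : z' ∈ chartRange F χ c) :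
    |ghat F c.x z - ghat F c.x z'| * uPes F.f χ (fhatI (-1) c.x) ≤
      (Real.exp (-χ) + F.K * ε) * (|z - z'| * uPes F.f χ c.x) := by
  have hK : 0 ≤ F.K := zero_le_one.trans F.hK.le
  set B := |(deriv F.f (c.x (-1)))⁻¹| + F.K * Qeps F χ ε c.x ^ F.β
  have hconv : Convex ℝ (chartRange F χ c) :=
    chartRange_eq_closedBall hc.1 ▸ convex_closedBall _ _
  have hLip : |ghat F c.x z - ghat F c.x z'| ≤ B * |z - z'| :=
    hconv.norm_image_sub_le_of_norm_deriv_le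
      (fun ζ hζ => (isInverseBranch hA hc.1).differentiableAt_ghat ζ
        (hc.chartRange_subset_ball hA hε hε1 hζ))
      (fun ζ hζ => hc.abs_deriv_ghat_le hA hε hε1 hζ) hz' hz
  have hB : B * uPes F.f χ (fhatI (-1) c.x) ≤ (Real.exp (-χ) + F.K * ε) * uPes F.f χ c.x := by
    have herr : F.K * (Qeps F χ ε c.x ^ F.β * uPes F.f χ (fhatI (-1) c.x)) ≤
        F.K * (ε * uPes F.f χ c.x) :=
      mul_le_mul_of_nonneg_left ((Qeps_rpow_mul_uPes_le hA hε hε1 hc.1).trans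
        (le_mul_of_one_le_right hε.le (one_le_uPes hc.1))) hK
    linarith [abs_inv_deriv_mul_uPes_le hc.1]
  calc _ ≤ B * |z - z'| * uPes F.f χ (fhatI (-1) c.x) :=
        mul_le_mul_of_nonneg_right hLip (uPes_nonneg _ _ _)
    _ = B * uPes F.f χ (fhatI (-1) c.x) * |z - z'| := mul_right_comm _ _ _
    _ ≤ (Real.exp (-χ) + F.K * ε) * uPes F.f χ c.x * |z - z'| :=
        mul_le_mul_of_nonneg_right hB (abs_nonneg _)
    _ = _ := by ring

end ChartRange

section Edge

variable {F : GoodMap} {χ ε : ℝ} {v w : Chart}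

lemma IsChart.p_le (hA : F.SatA) (hs : IsSmall F χ ε) (hv : IsChart F χ ε v) : v.p ≤ ε :=
  hv.2.2.trans (Qeps_le hA hs.pos hs.le_one hv.1)

lemma IsChart.p_mul_uPes_le (hA : F.SatA) (hs : IsSmall F χ ε) (hv : IsChart F χ ε v) :
    v.p * uPes F.f χ v.x ≤ ε :=
  (mul_le_mul_of_nonneg_right hv.2.2 (uPes_nonneg _ _ _)).trans
    (Qeps_mul_uPes_le hA hs.pos hs.le_one hv.1)

lemma Edge.dist_add_dist_le (hA : F.SatA) (hs : IsSmall F χ ε) (he : Edge F χ ε v w) :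
    |w.x (-1) - v.x 0| + |(uPes F.f χ (fhatI (-1) w.x))⁻¹ - (uPes F.f χ v.x)⁻¹| ≤ v.p * v.p := by
  obtain ⟨hv, -, ⟨-, -, hov⟩, -⟩ := he
  have hp : v.p ≤ 1 := (hv.p_le hA hs).trans hs.le_one
  exact hov.le.trans (pow_le_of_le_one (mul_nonneg hv.2.1.le hv.2.1.le)
    (mul_le_one₀ hp hv.2.1.le hp) four_ne_zero)

lemma Edge.uPes_le (hA : F.SatA) (hs : IsSmall F χ ε) (he : Edge F χ ε v w) :
    uPes F.f χ v.x ≤ (1 + ε) * uPes F.f χ (fhatI (-1) w.x) := by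
  have hv := he.1
  have hV := uPes_pos hv.1
  have hW := uPes_pos (fhatI_mem_NUE he.2.1.1 (-1))
  set V := uPes F.f χ v.x
  set W := uPes F.f χ (fhatI (-1) w.x)
  have hinv : W⁻¹ - V⁻¹ ≤ v.p * v.p := (le_abs_self _).trans <|
    (le_add_of_nonneg_left (abs_nonneg _)).trans (he.dist_add_dist_le hA hs)
  have herr : v.p * (v.p * V) ≤ 1 * ε := mul_le_mul ((hv.p_le hA hs).trans hs.le_one)
    (hv.p_mul_uPes_le hA hs) (mul_nonneg hv.2.1.le hV.le) zero_le_one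
  calc V = W⁻¹ * (V * W) := by field_simp
    _ ≤ (V⁻¹ + v.p * v.p) * (V * W) :=
        mul_le_mul_of_nonneg_right (by linarith) (mul_pos hV hW).le
    _ = (1 + v.p * (v.p * V)) * W := by field_simp
    _ ≤ (1 + ε) * W := mul_le_mul_of_nonneg_right (by linarith) hW.le

lemma Edge.abs_ghat_sub_mul_uPes_le (hA : F.SatA) (hs : IsSmall F χ ε) (he : Edge F χ ε v w)
    {z z' : ℝ} (hz : z ∈ chartRange F χ w) (hz' : z' ∈ chartRange F χ w) :
    |ghat F w.x z - ghat F w.x z'| * uPes F.f χ v.x ≤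
      Real.exp (-χ / 2) * (|z - z'| * uPes F.f χ w.x) := by
  have hε := hs.pos
  calc _ ≤ |ghat F w.x z - ghat F w.x z'| * ((1 + ε) * uPes F.f χ (fhatI (-1) w.x)) :=
        mul_le_mul_of_nonneg_left (he.uPes_le hA hs) (abs_nonneg _)
    _ = (1 + ε) * (|ghat F w.x z - ghat F w.x z'| * uPes F.f χ (fhatI (-1) w.x)) := by ring
    _ ≤ (1 + ε) * ((Real.exp (-χ) + F.K * ε) * (|z - z'| * uPes F.f χ w.x)) :=
        mul_le_mul_of_nonneg_left (he.2.1.abs_ghat_sub_mul_uPes_le hA hε hs.le_one hz hz')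
          (by positivity)
    _ = (1 + ε) * (Real.exp (-χ) + F.K * ε) * (|z - z'| * uPes F.f χ w.x) := by ring
    _ ≤ _ := mul_le_mul_of_nonneg_right hs.contracting.le
        (mul_nonneg (abs_nonneg _) (uPes_nonneg _ _ _))

lemma Edge.mapsTo_ghat (hA : F.SatA) (hs : IsSmall F χ ε) (he : Edge F χ ε v w) :
    MapsTo (ghat F w.x) (chartRange F χ w) (chartRange F χ v) := fun z hz => by
  obtain ⟨hv, hw, -, -, -, -, hp⟩ := id he
  have hcon := he.abs_ghat_sub_mul_uPes_le hA hs hz (center_mem_chartRange hw.1 hw.2.1.le)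
  rw [(isInverseBranch hA hw.1).ghat_apply_zero] at hcon
  have hz_le : |z - w.x 0| * uPes F.f χ w.x ≤ Real.exp ε * v.p :=
    ((mem_chartRange_iff hw.1).1 hz).trans (hp.trans_le (min_le_left _ _))
  have hrad := mul_le_mul_of_nonneg_left hz_le (Real.exp_pos (-χ / 2)).le
  have hshift : |w.x (-1) - v.x 0| * uPes F.f χ v.x ≤ v.p * ε := by
    calc _ ≤ v.p * v.p * uPes F.f χ v.x := mul_le_mul_of_nonneg_right
          ((le_add_of_nonneg_right (abs_nonneg _)).trans (he.dist_add_dist_le hA hs))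
          (uPes_nonneg _ _ _)
      _ ≤ v.p * ε := by
          rw [mul_assoc]
          exact mul_le_mul_of_nonneg_left (hv.p_mul_uPes_le hA hs) hv.2.1.le
  have htri := mul_le_mul_of_nonneg_right (abs_sub_le (ghat F w.x z) (w.x (-1)) (v.x 0))
    (uPes_nonneg F.f χ v.x)
  rw [mem_chartRange_iff hv.1]
  linarith [mul_le_mul_of_nonneg_right hs.mapsTo.le hv.2.1.le]

lemma Edge.apply_ghat (hA : F.SatA) (hs : IsSmall F χ ε) (he : Edge F χ ε v w) {z : ℝ}
    (hz : z ∈ chartRange F χ w) : F.f (ghat F w.x z) = z :=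
  (isInverseBranch hA he.2.1.1).apply_ghat z
    (he.2.1.chartRange_subset_ball hA hs.pos hs.le_one hz)

lemma Edge.chartRange_subset_ball (hA : F.SatA) (hs : IsSmall F χ ε) (he : Edge F χ ε v w) :
    chartRange F χ v ⊆ ball (w.x (-1)) (2 * F.r (w.x (-1))) := fun y hy => by
  obtain ⟨hv, hw, -, hdist, -⟩ := id he
  have hε := hs.pos
  have hp0 := hv.2.1
  have hdist' : |v.x 0 - w.x (-1)| ≤ v.p := by
    rw [abs_sub_comm]
    exact (le_add_of_nonneg_right (abs_nonneg _)).trans <| (he.dist_add_dist_le hA hs).trans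
      (mul_le_of_le_one_left hp0.le ((hv.p_le hA hs).trans hs.le_one))
  have hpρ : v.p ≤ rho F v.x / 2 := hv.2.2.trans (Qeps_le_half_rho hA hε hs.le_one hv.1)
  have hr : (rho F v.x / 2) ^ F.a < F.r (w.x (-1)) := by
    refine (isInverseBranch hA hw.1).rpow_lt_r (by linarith) ?_ ?_
    · linarith [rho_le_dS_zero F v.x, dS_sub_abs_sub_le F (v.x 0) (w.x (-1))]
    · linarith [rho_le_dS_one F v.x, dS_sub_abs_sub_le F (v.x 1) (w.x 0)]
  have hpr : v.p < F.r (w.x (-1)) :=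
    (hv.2.2.trans (Qeps_le_rho_rpow hA hε hs.le_one hv.1)).trans_lt hr
  rw [mem_ball, Real.dist_eq]
  linarith [abs_sub_le y (v.x 0) (w.x (-1)), abs_sub_center_le hv.1 hy]

lemma Edge.ghat_apply (hA : F.SatA) (hs : IsSmall F χ ε) (he : Edge F χ ε v w) {y : ℝ}
    (hy : y ∈ chartRange F χ v) (hfy : F.f y ∈ chartRange F χ w) : ghat F w.x (F.f y) = y :=
  (isInverseBranch hA he.2.1.1).injOn
    (he.chartRange_subset_ball hA hs (he.mapsTo_ghat hA hs hfy))
    (he.chartRange_subset_ball hA hs hy) (he.apply_ghat hA hs hfy)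

end Edge

/-! ### Inverse branches preserve the interval -/

/-- The ε-chart `Ψ_{x̂}^{Q_ε(x̂)}` of maximal size at `x̂`. -/
def maxChart (F : GoodMap) (χ ε : ℝ) (x : ℤ → ℝ) : Chart := ⟨x, Qeps F χ ε x⟩

/-- The terms `e^{ε|m|} Q_ε(f̂^m(x̂))` of the infimum defining `q_ε(x̂)`, indexed by `k = -m`. -/
def pastSize (F : GoodMap) (χ ε : ℝ) (x : ℤ → ℝ) (k : ℕ) : ℝ :=
  Real.exp (ε * k) * Qeps F χ ε (fhatI (-k) x)

/-- The size `p` of the chart `Ψ_{x̂}^p` satisfies `p ≤ e^{ε|m|} Q_ε(f̂^m(x̂))` for all `m ≤ 0`: it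
decays along the past of `x̂` no faster than the inverse branches contract, so that they can be
iterated on the whole chart domain. The family `𝔄` consists of such charts. -/
def IsTempered (F : GoodMap) (χ ε : ℝ) (c : Chart) : Prop :=
  ∀ k, c.p ≤ pastSize F χ ε c.x k

/-- The backward orbit of `z` under the inverse branches of `f` along the past of `x̂`. -/
def backwardOrbit (F : GoodMap) (x : ℤ → ℝ) (z : ℝ) : ℕ → ℝ
  | 0 => z
  | k + 1 => ghat F (fhatI (-k) x) (backwardOrbit F x z k)

section BackwardOrbit

variable {F : GoodMap} {χ ε : ℝ} {x : ℤ → ℝ} {c : Chart} {z : ℝ}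

lemma fhatI_neg_succ (k : ℕ) (x : ℤ → ℝ) :
    fhatI (-(k + 1 : ℕ)) x = fhatI (-1) (fhatI (-k) x) := by
  rw [fhatI_fhatI, Nat.cast_succ, neg_add_rev]

lemma fhatI_neg_apply_neg_one (k : ℕ) (x : ℤ → ℝ) : fhatI (-k) x (-1) = x (-(k + 1 : ℕ)) := by
  simp [fhatI]

lemma isChart_maxChart (hA : F.SatA) (hε : 0 < ε) (hx : x ∈ NUE F χ) :
    IsChart F χ ε (maxChart F χ ε x) :=
  ⟨hx, Qeps_pos hA hε hx, le_rfl⟩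

lemma IsSmall.rate_le (hs : IsSmall F χ ε) : Real.exp (-χ) + F.K * ε ≤ Real.exp (-χ / 2) := by
  have hε := hs.pos
  have hK := F.hK
  exact (le_mul_of_one_le_left (by positivity) (by linarith)).trans hs.contracting.le

lemma IsTempered.pow_mul_p_le (hA : F.SatA) (hs : IsSmall F χ ε) (hx : c.x ∈ NUE F χ)
    (hc : IsTempered F χ ε c) (k : ℕ) :
    Real.exp (-χ / 2) ^ k * c.p ≤ Qeps F χ ε (fhatI (-k) c.x) := by
  have hrate : Real.exp (-χ / 2) * Real.exp ε ≤ 1 := by linarith [hs.mapsTo, hs.pos]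
  calc _ ≤ Real.exp (-χ / 2) ^ k * (Real.exp (ε * k) * Qeps F χ ε (fhatI (-k) c.x)) :=
        mul_le_mul_of_nonneg_left (hc k) (pow_nonneg (Real.exp_pos _).le k)
    _ = (Real.exp (-χ / 2) * Real.exp ε) ^ k * Qeps F χ ε (fhatI (-k) c.x) := by
        rw [mul_comm ε, Real.exp_nat_mul, mul_pow, mul_assoc]
    _ ≤ _ := mul_le_of_le_one_left (Qeps_pos hA hs.pos (fhatI_mem_NUE hx _)).le
        (pow_le_one₀ (mul_pos (Real.exp_pos _) (Real.exp_pos _)).le hrate)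

lemma abs_ghat_sub_mul_uPes_le_of_mem_maxChart (hA : F.SatA) (hs : IsSmall F χ ε)
    (hx : x ∈ NUE F χ) (hz : z ∈ chartRange F χ (maxChart F χ ε x)) :
    |ghat F x z - x (-1)| * uPes F.f χ (fhatI (-1) x) ≤
      Real.exp (-χ / 2) * (|z - x 0| * uPes F.f χ x) := by
  have hmax := isChart_maxChart hA hs.pos hx
  have hcon := hmax.abs_ghat_sub_mul_uPes_le hA hs.pos hs.le_one hz
    (center_mem_chartRange hx hmax.2.1.le)
  rw [maxChart, (isInverseBranch hA hx).ghat_apply_zero] at hcon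
  exact hcon.trans
    (mul_le_mul_of_nonneg_right hs.rate_le (mul_nonneg (abs_nonneg _) (uPes_nonneg _ _ _)))

lemma abs_backwardOrbit_sub_mul_uPes_le (hA : F.SatA) (hs : IsSmall F χ ε) (hx : c.x ∈ NUE F χ)
    (hc : IsTempered F χ ε c) (hz : z ∈ chartRange F χ c) (k : ℕ) :
    |backwardOrbit F c.x z k - c.x (-k)| * uPes F.f χ (fhatI (-k) c.x) ≤
      Real.exp (-χ / 2) ^ k * c.p := by
  induction k with
  | zero => simpa [backwardOrbit, fhatI_zero] using (mem_chartRange_iff hx).1 hz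
  | succ k ih =>
    have hxk := fhatI_mem_NUE hx (-k)
    have hmem : backwardOrbit F c.x z k ∈ chartRange F χ (maxChart F χ ε (fhatI (-k) c.x)) := by
      rw [mem_chartRange_iff hxk]
      simpa [maxChart, fhatI] using ih.trans (hc.pow_mul_p_le hA hs hx k)
    have hstep := abs_ghat_sub_mul_uPes_le_of_mem_maxChart hA hs hxk hmem
    rw [← fhatI_neg_succ] at hstep
    rw [pow_succ', mul_assoc]
    refine le_trans ?_ (hstep.trans (mul_le_mul_of_nonneg_left ?_ (Real.exp_pos _).le))
    · simp [backwardOrbit, fhatI]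
    · simpa [fhatI] using ih

lemma backwardOrbit_mem_chartRange (hA : F.SatA) (hs : IsSmall F χ ε) (hx : c.x ∈ NUE F χ)
    (hc : IsTempered F χ ε c) (hz : z ∈ chartRange F χ c) (k : ℕ) :
    backwardOrbit F c.x z k ∈ chartRange F χ (maxChart F χ ε (fhatI (-k) c.x)) := by
  rw [mem_chartRange_iff (fhatI_mem_NUE hx _)]
  simpa [maxChart, fhatI] using (abs_backwardOrbit_sub_mul_uPes_le hA hs hx hc hz k).trans
    (hc.pow_mul_p_le hA hs hx k)

lemma apply_backwardOrbit_succ (hA : F.SatA) (hs : IsSmall F χ ε) (hx : c.x ∈ NUE F χ)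
    (hc : IsTempered F χ ε c) (hz : z ∈ chartRange F χ c) (k : ℕ) :
    F.f (backwardOrbit F c.x z (k + 1)) = backwardOrbit F c.x z k :=
  (isInverseBranch hA (fhatI_mem_NUE hx _)).apply_ghat _ <|
    (isChart_maxChart hA hs.pos (fhatI_mem_NUE hx _)).chartRange_subset_ball hA hs.pos hs.le_one
      (backwardOrbit_mem_chartRange hA hs hx hc hz k)

lemma abs_backwardOrbit_sub_le (hA : F.SatA) (hs : IsSmall F χ ε) (hx : c.x ∈ NUE F χ)
    (hc : IsTempered F χ ε c) (hz : z ∈ chartRange F χ c) (k : ℕ) :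
    |backwardOrbit F c.x z k - c.x (-k)| ≤ Real.exp (-χ / 2) ^ k * c.p :=
  (le_mul_of_one_le_right (abs_nonneg _) (one_le_uPes (fhatI_mem_NUE hx _))).trans
    (abs_backwardOrbit_sub_mul_uPes_le hA hs hx hc hz k)

lemma closedBall_backwardOrbit_subset_ball (hA : F.SatA) (hχ : 0 < χ) (hs : IsSmall F χ ε)
    (hc : IsChart F χ ε c) (ht : IsTempered F χ ε c) (hz : z ∈ chartRange F χ c) (k : ℕ) :
    closedBall (c.x (-(k + 1 : ℕ)))
        |backwardOrbit F c.x z (k + 1) - c.x (-(k + 1 : ℕ))| ⊆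
      ball (c.x (-(k + 1 : ℕ))) (2 * F.r (c.x (-(k + 1 : ℕ)))) := by
  have hxk := fhatI_mem_NUE hc.1 (-k)
  have hr := Qeps_lt_r hA hs.pos hs.le_one hxk
  have hr0 := (isInverseBranch hA hxk).r_pos
  rw [fhatI_neg_apply_neg_one] at hr hr0
  refine closedBall_subset_ball ?_
  calc _ ≤ Real.exp (-χ / 2) ^ (k + 1) * c.p :=
        abs_backwardOrbit_sub_le hA hs hc.1 ht hz (k + 1)
    _ ≤ Real.exp (-χ / 2) ^ k * c.p := mul_le_mul_of_nonneg_right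
        (pow_le_pow_of_le_one (Real.exp_pos _).le (exp_neg_half_lt_one hχ).le k.le_succ)
        hc.2.1.le
    _ ≤ Qeps F χ ε (fhatI (-k) c.x) := ht.pow_mul_p_le hA hs hc.1 k
    _ < 2 * F.r (c.x (-(k + 1 : ℕ))) := by linarith

lemma ghat_mem_Mset (hA : F.SatA) (hχ : 0 < χ) (hs : IsSmall F χ ε) (hc : IsChart F χ ε c)
    (ht : IsTempered F χ ε c) (hzM : z ∈ Mset) (hz : z ∈ chartRange F χ c) :
    ghat F c.x z ∈ Mset := by
  have hball := closedBall_backwardOrbit_subset_ball hA hχ hs hc ht hz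
  have hb (k : ℕ) : IsInverseBranch F (fhatI (-k) c.x) :=
    isInverseBranch hA (fhatI_mem_NUE hc.1 _)
  have hinj := fun k => (hb k).injOn
  have hdiff := fun k => (hb k).differentiableAt
  simp only [fhatI_neg_apply_neg_one] at hinj hdiff
  have hle := abs_backwardOrbit_sub_le hA hs hc.1 ht hz
  have hmem : backwardOrbit F c.x z 1 ∈ Mset := by
    refine mem_Icc_of_backward_orbits (Y := fun k => c.x (-k)) F.hmaps (fun k => hc.1.1.1 _)
      (fun k => ?_) hzM (apply_backwardOrbit_succ hA hs hc.1 ht hz)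
      (fun k y hy => (hdiff k y (hball k hy)).continuousAt.continuousWithinAt)
      (fun k => (hinj k).mono (hball k)) (fun k => ?_) ?_
    · simpa using hc.1.1.apply_eq (-(k + 1 : ℕ))
    · have hpow := mul_le_of_le_one_left hc.2.1.le (pow_le_one₀ (n := k + 1)
        (Real.exp_pos _).le (exp_neg_half_lt_one hχ).le)
      linarith [hle (k + 1), hc.p_le hA hs, hs.lt_quarter]
    · refine squeeze_zero (fun _ => abs_nonneg _) hle ?_
      simpa using (tendsto_pow_atTop_nhds_zero_of_lt_one (Real.exp_pos _).le
        (exp_neg_half_lt_one hχ)).mul_const c.p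
  simpa [backwardOrbit, fhatI_zero] using hmem

end BackwardOrbit

/-! ### Shadowing -/

section Shadowing

variable {F : GoodMap} {χ ε : ℝ} {v w : ℤ → Chart} {x y : ℤ → ℝ}

lemma IsChart.abs_sub_mul_uPes_le_two (hA : F.SatA) (hs : IsSmall F χ ε) {c : Chart}
    (hc : IsChart F χ ε c) {z z' : ℝ} (hz : z ∈ chartRange F χ c) (hz' : z' ∈ chartRange F χ c) :
    |z - z'| * uPes F.f χ c.x ≤ 2 := by
  linarith [abs_sub_mul_uPes_le hc.1 hz hz', hc.p_le hA hs, hs.le_one]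

lemma exists_shadows (hA : F.SatA) (hχ : 0 < χ) (hs : IsSmall F χ ε) (hv : IsGPO F χ ε v)
    (ht : ∀ n, IsTempered F χ ε (v n)) : ∃ x, Shadows F χ v x := by
  have hclosed (n : ℤ) : IsClosed (chartRange F χ (v n) ∩ Mset) :=
    (chartRange_eq_closedBall (hv n).1.1 ▸ isClosed_closedBall).inter isClosed_Icc
  have hmaps (n : ℤ) : MapsTo (ghat F (v (n + 1)).x) (chartRange F χ (v (n + 1)) ∩ Mset)
      (chartRange F χ (v n) ∩ Mset) := fun z hz =>
    ⟨(hv n).mapsTo_ghat hA hs hz.1, ghat_mem_Mset hA hχ hs (hv (n + 1)).1 (ht _) hz.2 hz.1⟩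
  obtain ⟨X, hX⟩ := exists_backward_orbit_of_contracting hclosed hmaps (c := fun n => (v n).x 0)
    (fun n => ⟨center_mem_chartRange (hv n).1.1 (hv n).1.2.1.le, (hv n).1.1.1.1 0⟩)
    (Real.exp_pos _).le (exp_neg_half_lt_one hχ)
    (fun n z hz z' hz' => (hv n).abs_ghat_sub_mul_uPes_le hA hs hz.1 hz'.1)
    (fun n => one_le_uPes (hv n).1.1)
    (fun n z hz z' hz' => (hv n).1.abs_sub_mul_uPes_le_two hA hs hz.1 hz'.1)
  refine ⟨X, ⟨fun n => (hX n).1.2, fun n => ?_⟩, fun n => (hX n).1.1⟩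
  have hfg := (hv (n - 1)).apply_ghat hA hs (hX (n - 1 + 1)).1.1
  rwa [(hX (n - 1)).2, sub_add_cancel] at hfg

lemma Shadows.ghat_apply (hA : F.SatA) (hs : IsSmall F χ ε) (hv : IsGPO F χ ε v)
    (hx : Shadows F χ v x) (n : ℤ) : ghat F (v (n + 1)).x (x (n + 1)) = x n := by
  rw [← hx.1.apply_eq n]
  exact (hv n).ghat_apply hA hs (hx.2 n) (by simpa only [hx.1.apply_eq n] using hx.2 (n + 1))

lemma Shadows.abs_sub_mul_uPes_le (hA : F.SatA) (hs : IsSmall F χ ε) (hv : IsGPO F χ ε v)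
    (hw : IsGPO F χ ε w) (hx : Shadows F χ v x) (hy : Shadows F χ w y) (k : ℕ) (n : ℤ)
    (h : ∀ j, n ≤ j → j ≤ n + k → v j = w j) :
    |x n - y n| * uPes F.f χ (v n).x ≤ 2 * Real.exp (-χ / 2) ^ k := by
  have hyv (j : ℤ) (hj : n ≤ j) (hj' : j ≤ n + k) : y j ∈ chartRange F χ (v j) :=
    h j hj hj' ▸ hy.2 j
  induction k generalizing n with
  | zero =>
    simpa using (hv n).1.abs_sub_mul_uPes_le_two hA hs (hx.2 n) (hyv n le_rfl (by simp))
  | succ k ih =>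
    have hstep := (hv n).abs_ghat_sub_mul_uPes_le hA hs (hx.2 (n + 1))
      (hyv (n + 1) (by omega) (by omega))
    have hgy := hy.ghat_apply hA hs hw n
    rw [← h (n + 1) (by omega) (by omega)] at hgy
    rw [hx.ghat_apply hA hs hv, hgy] at hstep
    have hnext := ih (n + 1) (fun j hj hj' => h j (by omega) (by omega))
      (fun j hj hj' => hyv j (by omega) (by omega))
    calc _ ≤ Real.exp (-χ / 2) * (2 * Real.exp (-χ / 2) ^ k) :=
          hstep.trans (mul_le_mul_of_nonneg_left hnext (Real.exp_pos _).le)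
      _ = 2 * Real.exp (-χ / 2) ^ (k + 1) := by ring

lemma Shadows.abs_sub_le (hA : F.SatA) (hs : IsSmall F χ ε) (hv : IsGPO F χ ε v)
    (hw : IsGPO F χ ε w) (hx : Shadows F χ v x) (hy : Shadows F χ w y) (k : ℕ) (n : ℤ)
    (h : ∀ j, n ≤ j → j ≤ n + k → v j = w j) : |x n - y n| ≤ 2 * Real.exp (-χ / 2) ^ k :=
  (le_mul_of_one_le_right (abs_nonneg _) (one_le_uPes (hv n).1.1)).trans
    (hx.abs_sub_mul_uPes_le hA hs hv hw hy k n h)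

lemma Shadows.unique (hA : F.SatA) (hχ : 0 < χ) (hs : IsSmall F χ ε) (hv : IsGPO F χ ε v)
    (hx : Shadows F χ v x) (hy : Shadows F χ v y) : x = y := by
  funext n
  have hlim : Tendsto (fun k : ℕ => 2 * Real.exp (-χ / 2) ^ k) atTop (𝓝 0) := by
    simpa using (tendsto_pow_atTop_nhds_zero_of_lt_one (Real.exp_pos _).le
      (exp_neg_half_lt_one hχ)).const_mul 2
  have hzero := ge_of_tendsto' hlim fun k => hx.abs_sub_le hA hs hv hv hy k n fun _ _ _ => rfl
  exact sub_eq_zero.1 (abs_nonpos_iff.1 hzero)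

lemma Shadows.fhat (hx : Shadows F χ v x) : Shadows F χ (fun n => v (n + 1)) (fhat x) :=
  ⟨hx.1.shift 1, fun n => hx.2 (n + 1)⟩

lemma exists_dhat_le_mul_dSigma_rpow (hA : F.SatA) (hχ : 0 < χ) (hs : IsSmall F χ ε) :
    ∃ C > 0, ∃ α : ℝ, 0 < α ∧ α ≤ 1 ∧ ∀ {v w x y}, IsGPO F χ ε v → IsGPO F χ ε w →
      Shadows F χ v x → Shadows F χ w y → dhat x y ≤ C * dSigma v w ^ α := by
  set θ := max (Real.exp (-χ / 2)) (1 / 2)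
  have hθ : 1 / 2 ≤ θ := le_max_right _ _
  have hθ1 : θ < 1 := max_lt (exp_neg_half_lt_one hχ) (by norm_num)
  have hθ0 : 0 < θ := by linarith
  have hlog : -Real.log 2 ≤ Real.log θ := by
    simpa [Real.log_inv] using Real.log_le_log (by norm_num) hθ
  refine ⟨2 / θ, by positivity, -Real.log θ, neg_pos.2 (Real.log_neg hθ0 hθ1),
    by linarith [Real.log_two_lt_d9], fun hv hw hx hy => ?_⟩
  refine dhat_le_mul_dSigma_rpow hθ hθ1
    (fun n => (abs_sub_le_half_of_mem_Mset (hx.1.1 n) (hy.1.1 n)).trans (by norm_num))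
    fun n k h => (hx.abs_sub_le hA hs hv hw hy k n h).trans ?_
  exact mul_le_mul_of_nonneg_left
    (pow_le_pow_left₀ (Real.exp_pos _).le (le_max_left _ _) k) zero_le_two

/-- The point of `M̂` shadowed by an ε-gpo, the map `π` of the paper; its value is arbitrary when
there is no such point. -/
def shadowedPoint (F : GoodMap) (χ : ℝ) (v : ℤ → Chart) : ℤ → ℝ :=
  Classical.epsilon (Shadows F χ v)

lemma shadows_shadowedPoint (hA : F.SatA) (hχ : 0 < χ) (hs : IsSmall F χ ε) (hv : IsGPO F χ ε v)
    (ht : ∀ n, IsTempered F χ ε (v n)) : Shadows F χ v (shadowedPoint F χ v) :=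
  Classical.epsilon_spec (exists_shadows hA hχ hs hv ht)

lemma Shadows.shadowedPoint_eq (hA : F.SatA) (hχ : 0 < χ) (hs : IsSmall F χ ε)
    (hv : IsGPO F χ ε v) (hx : Shadows F χ v x) : shadowedPoint F χ v = x :=
  (Classical.epsilon_spec ⟨x, hx⟩ : Shadows F χ v (shadowedPoint F χ v)).unique hA hχ hs hv hx

end Shadowing

/-! ### The parameter `q_ε` -/

section QEps

variable {F : GoodMap} {χ ε : ℝ} {x : ℤ → ℝ}

lemma pastSize_zero (F : GoodMap) (χ ε : ℝ) (x : ℤ → ℝ) : pastSize F χ ε x 0 = Qeps F χ ε x := by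
  simp [pastSize, fhatI_zero]

lemma pastSize_fhatI_one_succ (F : GoodMap) (χ ε : ℝ) (x : ℤ → ℝ) (k : ℕ) :
    pastSize F χ ε (fhatI 1 x) (k + 1) = Real.exp ε * pastSize F χ ε x k := by
  rw [pastSize, pastSize, fhatI_fhatI, ← mul_assoc, ← Real.exp_add]
  congr 2
  · push_cast
    ring
  · congr 1
    push_cast
    ring

lemma pastSize_pos (hA : F.SatA) (hε : 0 < ε) (hx : x ∈ NUE F χ) (k : ℕ) : 0 < pastSize F χ ε x k :=
  mul_pos (Real.exp_pos _) (Qeps_pos hA hε (fhatI_mem_NUE hx _))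

lemma bddBelow_range_pastSize (hA : F.SatA) (hε : 0 < ε) (hx : x ∈ NUE F χ) :
    BddBelow (range (pastSize F χ ε x)) :=
  ⟨0, forall_mem_range.2 fun k => (pastSize_pos hA hε hx k).le⟩

lemma qeps_eq_mul_iInf_pastSize (F : GoodMap) (χ ε : ℝ) (x : ℤ → ℝ) :
    qeps F χ ε x = deltaEps ε * ⨅ k, pastSize F χ ε x k := by
  rw [qeps, iInf]
  congr 2
  ext t
  constructor
  · rintro ⟨m, hm, rfl⟩
    obtain ⟨k, rfl⟩ := Int.exists_eq_neg_ofNat hm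
    exact ⟨k, by simp [pastSize]⟩
  · rintro ⟨k, rfl⟩
    exact ⟨-k, by simp, by simp [pastSize]⟩

lemma qeps_nonneg (hA : F.SatA) (hε : 0 < ε) (hx : x ∈ NUE F χ) : 0 ≤ qeps F χ ε x := by
  rw [qeps_eq_mul_iInf_pastSize]
  exact mul_nonneg (deltaEps_pos ε).le (Real.iInf_nonneg fun k => (pastSize_pos hA hε hx k).le)

lemma isTempered_qeps (hA : F.SatA) (hε : 0 < ε) (hε1 : ε ≤ 1) (hx : x ∈ NUE F χ) :
    IsTempered F χ ε ⟨x, qeps F χ ε x⟩ := fun k => by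
  rw [qeps_eq_mul_iInf_pastSize]
  exact (mul_le_of_le_one_left (Real.iInf_nonneg fun j => (pastSize_pos hA hε hx j).le)
    (deltaEps_le_one hε hε1)).trans (ciInf_le (bddBelow_range_pastSize hA hε hx) k)

lemma qeps_le_Qeps (hA : F.SatA) (hε : 0 < ε) (hε1 : ε ≤ 1) (hx : x ∈ NUE F χ) :
    qeps F χ ε x ≤ Qeps F χ ε x :=
  (isTempered_qeps hA hε hε1 hx 0).trans_eq (pastSize_zero F χ ε x)

lemma qeps_fhatI_one (hA : F.SatA) (hε : 0 < ε) (hx : x ∈ NUE F χ) :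
    qeps F χ ε (fhatI 1 x) =
      min (Real.exp ε * qeps F χ ε x) (deltaEps ε * Qeps F χ ε (fhatI 1 x)) := by
  have hδ := (deltaEps_pos ε).le
  rw [qeps_eq_mul_iInf_pastSize, qeps_eq_mul_iInf_pastSize,
    ← inf_ciInf_nat_succ (bddBelow_range_pastSize hA hε (fhatI_mem_NUE hx 1)), pastSize_zero]
  simp only [pastSize_fhatI_one_succ]
  rw [← Real.mul_iInf_of_nonneg (Real.exp_pos ε).le, mul_min_of_nonneg _ _ hδ, min_comm,
    mul_left_comm]

lemma qeps_fhatI_pos_of_le (hA : F.SatA) (hε : 0 < ε) (hx : x ∈ NUE F χ) {m n : ℤ} (hmn : m ≤ n)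
    (hm : 0 < qeps F χ ε (fhatI m x)) : 0 < qeps F χ ε (fhatI n x) := by
  induction n, hmn using Int.leInduction with
  | base => exact hm
  | succ n _ ih =>
    rw [add_comm n, ← fhatI_fhatI, qeps_fhatI_one hA hε (fhatI_mem_NUE hx n)]
    exact lt_min (mul_pos (Real.exp_pos _) ih) (mul_pos (deltaEps_pos ε)
      (Qeps_pos hA hε (fhatI_mem_NUE (fhatI_mem_NUE hx n) 1)))

lemma exists_frequently_lt_qeps (hA : F.SatA) (hε : 0 < ε) (hx : x ∈ NUE F χ) {s : ℕ → ℤ}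
    (h : 0 < limsup (fun n => qeps F χ ε (fhatI (s n) x)) atTop) :
    ∃ t > 0, ∃ᶠ n in atTop, t < qeps F χ ε (fhatI (s n) x) := by
  obtain ⟨t, ht, hlt⟩ := exists_between h
  exact ⟨t, ht, frequently_lt_of_lt_limsup (IsBoundedUnder.isCoboundedUnder_le <|
    isBoundedUnder_of ⟨0, fun n => qeps_nonneg hA hε (fhatI_mem_NUE hx _)⟩) hlt⟩

lemma qeps_fhatI_pos (hA : F.SatA) (hε : 0 < ε) (hx : x ∈ NUE F χ)
    (h : 0 < limsup (fun n : ℕ => qeps F χ ε (fhatI (-n) x)) atTop) (n : ℤ) :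
    0 < qeps F χ ε (fhatI n x) := by
  obtain ⟨t, ht, hfreq⟩ := exists_frequently_lt_qeps hA hε hx (s := fun n => -n) h
  obtain ⟨m, hm, hlt⟩ := frequently_atTop.1 hfreq n.natAbs
  exact qeps_fhatI_pos_of_le hA hε hx (by omega) (ht.trans hlt)

lemma exists_qeps_eq (hA : F.SatA) (hε : 0 < ε) (hε1 : ε ≤ 1) (hx : x ∈ NUE F χ)
    (hq : 0 < qeps F χ ε x) : ∃ l : ℕ, qeps F χ ε x = deltaEps ε * Real.exp (-(ε * l) / 3) := by
  have hQ (k : ℕ) := exists_Qeps_isGreatest hA hε (fhatI_mem_NUE hx (-k))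
  choose m hm _ using hQ
  have hterm (k : ℕ) : pastSize F χ ε x k = Real.exp (ε / 3 * ((3 * k - m k : ℤ) : ℝ)) := by
    rw [pastSize, hm, ← Real.exp_add]
    congr 1
    push_cast
    ring
  have hmono : Monotone fun j : ℤ => Real.exp (ε / 3 * j) := fun i j hij =>
    Real.exp_le_exp.2 (mul_le_mul_of_nonneg_left (Int.cast_le.2 hij) (by positivity))
  have hlim : Tendsto (fun j : ℤ => Real.exp (ε / 3 * j)) atBot (𝓝 0) :=
    Real.tendsto_exp_atBot.comp <|
      (tendsto_intCast_atBot_iff.2 tendsto_id).const_mul_atBot (by positivity)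
  rw [qeps_eq_mul_iInf_pastSize] at hq ⊢
  obtain ⟨k, hk⟩ := csInf_mem_of_subset_range hmono hlim
    (range_subset_iff.2 fun k => ⟨_, (hterm k).symm⟩) (pos_of_mul_pos_right hq (deltaEps_pos ε).le)
  have hle : pastSize F χ ε x k ≤ 1 := by
    rw [hk]
    exact (csInf_le (bddBelow_range_pastSize hA hε hx) ⟨0, pastSize_zero F χ ε x⟩).trans
      ((Qeps_le hA hε hε1 hx).trans hε1)
  rw [hterm, Real.exp_le_one_iff, mul_nonpos_iff_pos_imp_nonpos] at hle
  have hkm : 3 * (k : ℤ) - m k ≤ 0 := Int.cast_nonpos.1 (hle.1 (by positivity))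
  obtain ⟨l, hl⟩ := Int.exists_eq_neg_ofNat hkm
  refine ⟨l, ?_⟩
  rw [iInf, ← hk, hterm, hl]
  congr 2
  push_cast
  ring

end QEps

/-! ### Nets of charts -/

lemma exists_finite_subset_dist_lt_of_isBounded {α β : Type*} [PseudoMetricSpace β] [ProperSpace β]
    {Φ : α → β} {s : Set α} (hs : Bornology.IsBounded (Φ '' s)) {δ : ℝ} (hδ : 0 < δ) :
    ∃ t ⊆ s, t.Finite ∧ ∀ x ∈ s, ∃ y ∈ t, dist (Φ x) (Φ y) < δ := by
  have htot : TotallyBounded (Φ '' s) := hs.isCompact_closure.totallyBounded.subset subset_closure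
  have hnet := Metric.finite_approx_of_totallyBounded htot δ hδ
  rw [exists_subset_image_finite_and] at hnet
  obtain ⟨t, hts, ht, hcover⟩ := hnet
  refine ⟨t, hts, ht, fun x hx => ?_⟩
  simpa using hcover ⟨x, hx, rfl⟩

/-- The data of `x̂` on which its relation to charts depends: the positions `x_i` and the logarithms
of the parameters `u(f̂^i(x̂))` for `i ∈ {-1, 0, 1}`. -/
def orbitData (F : GoodMap) (χ : ℝ) (x : ℤ → ℝ) : Icc (-1 : ℤ) 1 → ℝ × ℝ :=
  fun i => (x i, Real.log (uPes F.f χ (fhatI i x)))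

/-- The ε-chart `Ψ_{x̂}^{q_ε(x̂)}`. -/
def qChart (F : GoodMap) (χ ε : ℝ) (x : ℤ → ℝ) : Chart := ⟨x, qeps F χ ε x⟩

/-- `ŷ` has the same parameters `Q_ε` and `q_ε` as `x̂`, and its orbit data are so close to those of
`x̂` that `Ψ_{ŷ}^{q_ε(ŷ)}` can replace `Ψ_{x̂}^{q_ε(x̂)}` in the coding of an orbit. -/
structure Approximates (F : GoodMap) (χ ε : ℝ) (y x : ℤ → ℝ) : Prop where
  mem_NUE : y ∈ NUE F χ
  Qeps_eq : Qeps F χ ε y = Qeps F χ ε x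
  qeps_eq : qeps F χ ε y = qeps F χ ε x
  dist_lt : dist (orbitData F χ x) (orbitData F χ y) < qeps F χ ε x ^ 8 / 16

/-- A set of centres, only finitely many of which have `q_ε` above any given threshold, that
approximates every point of `NUE_χ` with `q_ε > 0`. -/
structure IsNet (F : GoodMap) (χ ε : ℝ) (N : Set (ℤ → ℝ)) : Prop where
  mem_NUE : ∀ y ∈ N, y ∈ NUE F χ
  qeps_pos : ∀ y ∈ N, 0 < qeps F χ ε y
  finite : ∀ t > 0, {y | y ∈ N ∧ t ≤ qeps F χ ε y}.Finite
  exists_approximates : ∀ x ∈ NUE F χ, 0 < qeps F χ ε x → ∃ y ∈ N, Approximates F χ ε y x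

/-- The points of `NUE_χ` with `Q_ε = e^{-εk/3}` and `q_ε = δ_ε e^{-εl/3}`. -/
def levelSet (F : GoodMap) (χ ε : ℝ) (k l : ℕ) : Set (ℤ → ℝ) :=
  {x | x ∈ NUE F χ ∧ Qeps F χ ε x = Real.exp (-(ε * k) / 3) ∧
    qeps F χ ε x = deltaEps ε * Real.exp (-(ε * l) / 3)}

section Net

variable {F : GoodMap} {χ ε : ℝ} {x y : ℤ → ℝ} {N : Set (ℤ → ℝ)}

lemma abs_sub_le_dist_orbitData (F : GoodMap) (χ : ℝ) (x y : ℤ → ℝ) {i : ℤ}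
    (hi : i ∈ Icc (-1) 1) : |x i - y i| ≤ dist (orbitData F χ x) (orbitData F χ y) :=
  (le_max_left _ _).trans (dist_le_pi_dist (orbitData F χ x) (orbitData F χ y) ⟨i, hi⟩)

lemma abs_log_uPes_sub_le_dist_orbitData (F : GoodMap) (χ : ℝ) (x y : ℤ → ℝ) {i : ℤ}
    (hi : i ∈ Icc (-1) 1) :
    |Real.log (uPes F.f χ (fhatI i x)) - Real.log (uPes F.f χ (fhatI i y))| ≤
      dist (orbitData F χ x) (orbitData F χ y) :=
  (le_max_right _ _).trans (dist_le_pi_dist (orbitData F χ x) (orbitData F χ y) ⟨i, hi⟩)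

lemma uPes_fhatI_le (hA : F.SatA) (hε : 0 < ε) (hε1 : ε ≤ 1) (hx : x ∈ NUE F χ) {i : ℤ}
    (hi : i ∈ Icc (-1) 1) :
    uPes F.f χ (fhatI i x) ≤ 1 + Real.exp χ * (Qeps F χ ε x)⁻¹ * (Qeps F χ ε x)⁻¹ +
      (Qeps F χ ε x)⁻¹ := by
  have hQ := Qeps_pos hA hε hx
  have hQ1 := (Qeps_le hA hε hε1 hx).trans hε1
  have hi' : i = -1 ∨ i = 0 ∨ i = 1 := by
    obtain ⟨h₁, h₂⟩ := hi
    omega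
  have hprod : 0 ≤ Real.exp χ * (Qeps F χ ε x)⁻¹ * (Qeps F χ ε x)⁻¹ := by positivity
  have hinv : 0 ≤ (Qeps F χ ε x)⁻¹ := by positivity
  rcases hi' with rfl | rfl | rfl
  · have hpow : Qeps F χ ε x * uPes F.f χ (fhatI (-1) x) ≤ 1 :=
      (mul_le_mul_of_nonneg_right (Real.self_le_rpow_of_le_one hQ.le hQ1 F.hβ1.le)
        (uPes_nonneg _ _ _)).trans ((Qeps_rpow_mul_uPes_le hA hε hε1 hx).trans hε1)
    linarith [(le_inv_mul_iff₀ hQ).2 hpow]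
  · rw [fhatI_zero]
    linarith [uPes_le_inv_Qeps hA hε hε1 hx]
  · have hrec := uPes_le_one_add (fhatI_mem_NUE hx 1)
    have hderiv : |(deriv F.f (fhatI 1 x (-1)))⁻¹| ≤ (Qeps F χ ε x)⁻¹ := by
      rw [abs_inv]
      exact inv_anti₀ hQ (Qeps_le_abs_deriv hA hε hε1 hx)
    rw [fhatI_fhatI, neg_add_cancel, fhatI_zero] at hrec
    have hmul : Real.exp χ * |(deriv F.f (fhatI 1 x (-1)))⁻¹| * uPes F.f χ x ≤
        Real.exp χ * (Qeps F χ ε x)⁻¹ * (Qeps F χ ε x)⁻¹ := by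
      gcongr
      · exact uPes_nonneg _ _ _
      · exact uPes_le_inv_Qeps hA hε hε1 hx
    linarith

lemma isBounded_orbitData_image (hA : F.SatA) (hε : 0 < ε) (hε1 : ε ≤ 1) {q : ℝ} (hq : 0 < q) :
    Bornology.IsBounded (orbitData F χ '' {x | x ∈ NUE F χ ∧ q ≤ Qeps F χ ε x}) := by
  refine isBounded_iff_forall_norm_le.2
    ⟨1 + Real.exp χ * q⁻¹ * q⁻¹ + q⁻¹, forall_mem_image.2 fun x ⟨hx, hqQ⟩ => ?_⟩
  have hprod : 0 ≤ Real.exp χ * q⁻¹ * q⁻¹ + q⁻¹ := by positivity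
  refine (pi_norm_le_iff_of_nonneg (by linarith)).2 fun i => max_le ?_ ?_
  · obtain ⟨h₀, h₁⟩ := hx.1.1 i
    change |x i| ≤ _
    rw [abs_of_nonneg h₀]
    linarith
  · have hQ := Qeps_pos hA hε hx
    have hu := one_le_uPes (fhatI_mem_NUE hx i)
    change |Real.log (uPes F.f χ (fhatI i x))| ≤ _
    rw [abs_of_nonneg (Real.log_nonneg hu)]
    refine (Real.log_le_self (zero_le_one.trans hu)).trans
      ((uPes_fhatI_le hA hε hε1 hx i.2).trans ?_)
    gcongr

lemma isChart_qChart (hA : F.SatA) (hε : 0 < ε) (hε1 : ε ≤ 1) (hx : x ∈ NUE F χ)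
    (hq : 0 < qeps F χ ε x) : IsChart F χ ε (qChart F χ ε x) :=
  ⟨hx, hq, qeps_le_Qeps hA hε hε1 hx⟩

lemma exists_finite_net_levelSet (hA : F.SatA) (hε : 0 < ε) (hε1 : ε ≤ 1) (k l : ℕ) :
    ∃ T ⊆ levelSet F χ ε k l, T.Finite ∧
      ∀ x ∈ levelSet F χ ε k l, ∃ y ∈ T, Approximates F χ ε y x := by
  have hbdd := isBounded_orbitData_image (χ := χ) hA hε hε1 (Real.exp_pos (-(ε * k) / 3))
  have hmesh : 0 < (deltaEps ε * Real.exp (-(ε * l) / 3)) ^ 8 / 16 := by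
    have := deltaEps_pos ε
    positivity
  obtain ⟨T, hT, hfin, happ⟩ := exists_finite_subset_dist_lt_of_isBounded
    (hbdd.subset (image_mono fun x (hx : x ∈ levelSet F χ ε k l) => ⟨hx.1, hx.2.1.ge⟩)) hmesh
  refine ⟨T, hT, hfin, fun x hx => ?_⟩
  obtain ⟨y, hy, hdist⟩ := happ x hx
  obtain ⟨hyN, hyQ, hyq⟩ := hT hy
  exact ⟨y, hy, hyN, hyQ.trans hx.2.1.symm, hyq.trans hx.2.2.symm, hx.2.2.symm ▸ hdist⟩

lemma exists_le_of_le_exp (hε : 0 < ε) {t : ℝ} (ht : 0 < t) :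
    ∃ K : ℕ, ∀ k : ℕ, t ≤ Real.exp (-(ε * k) / 3) → k ≤ K := by
  have hneg : -ε / 3 < 0 := by linarith
  obtain ⟨K, hK⟩ := exists_pow_lt_of_lt_one ht (Real.exp_lt_one_iff.2 hneg)
  refine ⟨K, fun k hk => not_lt.1 fun hKk => hK.not_ge ?_⟩
  rw [exp_neg_mul_div_three] at hk
  exact hk.trans (pow_le_pow_of_le_one (Real.exp_pos _).le (Real.exp_le_one_iff.2 hneg.le) hKk.le)

lemma exists_isNet (hA : F.SatA) (hε : 0 < ε) (hε1 : ε ≤ 1) : ∃ N, IsNet F χ ε N := by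
  choose T hTL hT happ using exists_finite_net_levelSet (F := F) (χ := χ) hA hε hε1
  have hδ := deltaEps_pos ε
  refine ⟨⋃ k, ⋃ l, T k l, ?_, ?_, fun t ht => ?_, fun x hx hq => ?_⟩
  · simp only [mem_iUnion]
    rintro y ⟨k, l, hy⟩
    exact (hTL k l hy).1
  · simp only [mem_iUnion]
    rintro y ⟨k, l, hy⟩
    rw [(hTL k l hy).2.2]
    positivity
  · obtain ⟨K, hK⟩ := exists_le_of_le_exp hε ht
    refine ((finite_Iic K).biUnion fun k _ => (finite_Iic K).biUnion fun l _ => hT k l).subset ?_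
    rintro y ⟨hy, hty⟩
    simp only [mem_iUnion] at hy ⊢
    obtain ⟨k, l, hy⟩ := hy
    obtain ⟨hyN, hQ, hq⟩ := hTL k l hy
    refine ⟨k, hK k ?_, l, hK l ?_, hy⟩
    · exact hQ ▸ hty.trans (qeps_le_Qeps hA hε hε1 hyN)
    · exact (hq ▸ hty).trans (mul_le_of_le_one_left (Real.exp_pos _).le (deltaEps_le_one hε hε1))
  · obtain ⟨k, hk, -⟩ := exists_Qeps_isGreatest hA hε hx
    obtain ⟨l, hl⟩ := exists_qeps_eq hA hε hε1 hx hq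
    obtain ⟨y, hy, hyx⟩ := happ k l x ⟨hx, hk, hl⟩
    exact ⟨y, mem_iUnion₂.2 ⟨k, l, hy⟩, hyx⟩

lemma IsNet.countable (hN : IsNet F χ ε N) : N.Countable := by
  refine (countable_iUnion fun n : ℕ => (hN.finite (1 / (n + 1)) (by positivity)).countable).mono
    fun y hy => ?_
  obtain ⟨n, hn⟩ := exists_nat_one_div_lt (hN.qeps_pos y hy)
  exact mem_iUnion.2 ⟨n, hy, hn.le⟩

lemma IsNet.exists_infinite_fiber (hN : IsNet F χ ε N) {y : ℤ → ℤ → ℝ} (hy : ∀ n, y n ∈ N)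
    {s : ℕ → ℤ} (hs : Function.Injective s) {R : Set ℤ} (hR : ∀ n > 0, s n ∈ R) {t : ℝ}
    (ht : 0 < t) (hfreq : ∃ᶠ n in atTop, t < qeps F χ ε (y (s n))) :
    ∃ z, {n | n ∈ R ∧ y n = z}.Infinite := by
  have hinf := Nat.frequently_atTop_iff_infinite.1 (hfreq.and_eventually (eventually_gt_atTop 0))
  obtain ⟨z, hz⟩ := exists_infinite_fiber_of_mapsTo (hinf.image hs.injOn) (hN.finite t ht)
    (forall_mem_image.2 fun n hn => ⟨hy (s n), hn.1.le⟩)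
  refine ⟨z, hz.mono ?_⟩
  rintro _ ⟨⟨n, hn, rfl⟩, hz⟩
  exact ⟨hR n hn.2, hz⟩

lemma Approximates.mem_chartRange_qChart (hA : F.SatA) (hs : IsSmall F χ ε)
    (h : Approximates F χ ε y x) (hq : 0 < qeps F χ ε x) :
    x 0 ∈ chartRange F χ (qChart F χ ε y) := by
  have hy := isChart_qChart hA hs.pos hs.le_one h.mem_NUE (h.qeps_eq ▸ hq)
  have hp : qeps F χ ε x ≤ 1 := by
    rw [← h.qeps_eq]
    exact (hy.p_le hA hs).trans hs.le_one
  have hpu : qeps F χ ε x * uPes F.f χ y ≤ 1 := by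
    rw [← h.qeps_eq]
    exact (hy.p_mul_uPes_le hA hs).trans hs.le_one
  have hdist : |x 0 - y 0| ≤ qeps F χ ε x ^ 2 := by
    have hpow := pow_le_pow_of_le_one hq.le hp (show 2 ≤ 8 by norm_num)
    linarith [abs_sub_le_dist_orbitData F χ x y (i := 0) (by simp), h.dist_lt,
      sq_nonneg (qeps F χ ε x)]
  rw [mem_chartRange_iff hy.1]
  calc |x 0 - y 0| * uPes F.f χ y ≤ qeps F χ ε x ^ 2 * uPes F.f χ y :=
        mul_le_mul_of_nonneg_right hdist (uPes_nonneg _ _ _)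
    _ = qeps F χ ε x * (qeps F χ ε x * uPes F.f χ y) := by ring
    _ ≤ qeps F χ ε x := mul_le_of_le_one_right hq.le hpu
    _ = (qChart F χ ε y).p := h.qeps_eq.symm

lemma Approximates.abs_shift_sub_lt {y' : ℤ → ℝ} (h : Approximates F χ ε y x)
    (h' : Approximates F χ ε y' (fhatI 1 x))
    (hq : qeps F χ ε (fhatI 1 x) ^ 8 ≤ 2 * qeps F χ ε x ^ 8) {i : ℤ} (hi : i ∈ Icc (-1) 0) :
    |y' i - y (i + 1)| < 3 / 16 * qeps F χ ε x ^ 8 ∧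
      |Real.log (uPes F.f χ (fhatI i y')) - Real.log (uPes F.f χ (fhatI (i + 1) y))| <
        3 / 16 * qeps F χ ε x ^ 8 := by
  have hi₀ : i ∈ Icc (-1) 1 := ⟨hi.1, hi.2.trans zero_le_one⟩
  have hi₁ : i + 1 ∈ Icc (-1) 1 := ⟨by linarith [hi.1], by linarith [hi.2]⟩
  have hpos := abs_sub_le_dist_orbitData F χ x y hi₁
  have hpos' := abs_sub_le_dist_orbitData F χ (fhatI 1 x) y' hi₀
  have hlog := abs_log_uPes_sub_le_dist_orbitData F χ x y hi₁
  have hlog' := abs_log_uPes_sub_le_dist_orbitData F χ (fhatI 1 x) y' hi₀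
  rw [abs_sub_comm] at hpos' hlog'
  rw [fhatI_fhatI] at hlog'
  have hdist := h.dist_lt
  have hdist' := h'.dist_lt
  constructor
  · have htri := abs_sub_le (y' i) (x (i + 1)) (y (i + 1))
    change |y' i - x (i + 1)| ≤ _ at hpos'
    linarith
  · have htri := abs_sub_le (Real.log (uPes F.f χ (fhatI i y')))
      (Real.log (uPes F.f χ (fhatI (i + 1) x))) (Real.log (uPes F.f χ (fhatI (i + 1) y)))
    linarith

lemma qeps_fhatI_one_pow_eight_le (hA : F.SatA) (hs : IsSmall F χ ε) (hx : x ∈ NUE F χ) :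
    qeps F χ ε (fhatI 1 x) ^ 8 ≤ 2 * qeps F χ ε x ^ 8 := by
  have hle : qeps F χ ε (fhatI 1 x) ≤ Real.exp ε * qeps F χ ε x :=
    (qeps_fhatI_one hA hs.pos hx).trans_le (min_le_left _ _)
  calc qeps F χ ε (fhatI 1 x) ^ 8 ≤ (Real.exp ε * qeps F χ ε x) ^ 8 :=
        pow_le_pow_left₀ (qeps_nonneg hA hs.pos (fhatI_mem_NUE hx 1)) hle 8
    _ = Real.exp ε ^ 8 * qeps F χ ε x ^ 8 := mul_pow _ _ _
    _ ≤ 2 * qeps F χ ε x ^ 8 :=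
        mul_le_mul_of_nonneg_right hs.exp_pow_eight_lt.le
          (pow_nonneg (qeps_nonneg hA hs.pos hx) 8)

lemma edge_qChart (hA : F.SatA) (hs : IsSmall F χ ε) {y' : ℤ → ℝ} (hx : x ∈ NUE F χ)
    (hq : 0 < qeps F χ ε x) (hq' : 0 < qeps F χ ε (fhatI 1 x)) (h : Approximates F χ ε y x)
    (h' : Approximates F χ ε y' (fhatI 1 x)) :
    Edge F χ ε (qChart F χ ε y) (qChart F χ ε y') := by
  have hc : IsChart F χ ε (qChart F χ ε y) :=
    isChart_qChart hA hs.pos hs.le_one h.mem_NUE (h.qeps_eq ▸ hq)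
  have hc' : IsChart F χ ε (qChart F χ ε y') :=
    isChart_qChart hA hs.pos hs.le_one h'.mem_NUE (h'.qeps_eq ▸ hq')
  have hpow := qeps_fhatI_one_pow_eight_le hA hs hx
  have hparam : qeps F χ ε y' =
      min (Real.exp ε * qeps F χ ε y) (deltaEps ε * Qeps F χ ε y') := by
    rw [h'.qeps_eq, h.qeps_eq, h'.Qeps_eq, qeps_fhatI_one hA hs.pos hx]
  obtain ⟨hprev, hlogPrev⟩ := h.abs_shift_sub_lt h' hpow (i := -1) (by simp)
  obtain ⟨hnext, hlogNext⟩ := h.abs_shift_sub_lt h' hpow (i := 0) (by simp)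
  rw [← h.qeps_eq] at hq hprev hlogPrev hnext hlogNext
  set q := qeps F χ ε y
  have hq8 : q ^ 8 ≤ q :=
    pow_le_of_le_one hq.le ((hc.p_le hA hs).trans hs.le_one) (by norm_num)
  have hq8_pos : 0 < q ^ 8 := by positivity
  rw [neg_add_cancel, fhatI_zero] at hlogPrev
  rw [zero_add, fhatI_zero] at hlogNext
  have hoverlap := abs_inv_sub_inv_le_abs_log_sub_log
    (one_le_uPes (fhatI_mem_NUE h'.mem_NUE (-1))) (one_le_uPes h.mem_NUE)
  have hratio := div_mem_Icc_exp_of_abs_log_sub_log_le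
    (uPes_pos (fhatI_mem_NUE h.mem_NUE 1)) (uPes_pos h'.mem_NUE)
    ((abs_sub_comm _ _).trans_le (hlogNext.le.trans (by linarith : _ ≤ q)))
  refine ⟨hc, hc', ⟨?_, ?_, ?_⟩, ?_, hratio.1, hratio.2, hparam⟩
  · exact (div_self hq.ne').symm ▸ Real.exp_le_one_iff.2 (neg_nonpos.2 hs.pos.le)
  · exact (div_self hq.ne').symm ▸ Real.one_le_exp hs.pos.le
  · change |y' (-1) - y 0| + |(uPes F.f χ (fhatI (-1) y'))⁻¹ - (uPes F.f χ y)⁻¹| < (q * q) ^ 4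
    rw [show (q * q) ^ 4 = q ^ 8 by ring]
    exact (add_lt_add hprev (hoverlap.trans_lt hlogPrev)).trans (by linarith)
  · change |y 1 - y' 0| < q
    rw [abs_sub_comm]
    exact hnext.trans (by linarith)

lemma IsNet.exists_recurrent_gpo (hA : F.SatA) (hs : IsSmall F χ ε) (hN : IsNet F χ ε N)
    (hx : x ∈ NUE F χ) (hfwd : 0 < limsup (fun n : ℕ => qeps F χ ε (fhatI n x)) atTop)
    (hbwd : 0 < limsup (fun n : ℕ => qeps F χ ε (fhatI (-(n : ℤ)) x)) atTop) :
    ∃ v, (∀ n, v n ∈ qChart F χ ε '' N) ∧ IsGPO F χ ε v ∧ Recurrent v ∧ Shadows F χ v x := by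
  have hq := qeps_fhatI_pos hA hs.pos hx hbwd
  choose y hyN hy using fun n => hN.exists_approximates _ (fhatI_mem_NUE hx n) (hq n)
  have hy_succ (n : ℤ) : Approximates F χ ε (y (n + 1)) (fhatI 1 (fhatI n x)) := by
    rw [fhatI_fhatI, add_comm 1 n]
    exact hy (n + 1)
  have hq_succ (n : ℤ) : 0 < qeps F χ ε (fhatI 1 (fhatI n x)) := by
    rw [fhatI_fhatI]
    exact hq _
  have infinite_chart {s : ℕ → ℤ} (hinj : Function.Injective s) {R : Set ℤ}
      (hR : ∀ n > 0, s n ∈ R) (hlim : 0 < limsup (fun n => qeps F χ ε (fhatI (s n) x)) atTop) :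
      ∃ c, {n | n ∈ R ∧ qChart F χ ε (y n) = c}.Infinite := by
    obtain ⟨t, ht, hfreq⟩ := exists_frequently_lt_qeps hA hs.pos hx hlim
    simp only [← (hy _).qeps_eq] at hfreq
    obtain ⟨z, hz⟩ := hN.exists_infinite_fiber hyN hinj hR ht hfreq
    exact ⟨qChart F χ ε z, hz.mono fun n hn => ⟨hn.1, congrArg _ hn.2⟩⟩
  refine ⟨fun n => qChart F χ ε (y n), fun n => mem_image_of_mem _ (hyN n), fun n => ?_,
    ⟨?_, ?_⟩, hx.1, fun n => ?_⟩
  · exact edge_qChart hA hs (fhatI_mem_NUE hx n) (hq n) (hq_succ n) (hy n) (hy_succ n)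
  · exact infinite_chart Nat.cast_injective (R := Ioi 0) (fun n hn => Int.natCast_pos.2 hn) hfwd
  · exact infinite_chart (neg_injective.comp Nat.cast_injective) (R := Iio 0)
      (fun n hn => neg_lt_zero.2 (Int.natCast_pos.2 hn)) hbwd
  · have hmem := (hy n).mem_chartRange_qChart hA hs (hq n)
    rwa [fhatI, zero_add] at hmem

end Net

theorem pi_properties_general (F : GoodMap) (hA : F.SatA) (χ : ℝ) (hχ : 0 < χ) :
    ∃ ε₀ > 0, ∀ ε : ℝ, 0 < ε → ε < ε₀ →
      ∃ A : Set Chart, A.Countable ∧ (∀ c ∈ A, IsChart F χ ε c) ∧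
      ∃ prj : (ℤ → Chart) → (ℤ → ℝ),
        (∀ v : ℤ → Chart, (∀ n, v n ∈ A) → IsGPO F χ ε v → Shadows F χ v (prj v)) ∧
        (∃ C > 0, ∃ α : ℝ, 0 < α ∧ α ≤ 1 ∧
          ∀ v w : ℤ → Chart, (∀ n, v n ∈ A) → IsGPO F χ ε v →
            (∀ n, w n ∈ A) → IsGPO F χ ε w →
            dhat (prj v) (prj w) ≤ C * dSigma v w ^ α) ∧
        (∀ v : ℤ → Chart, (∀ n, v n ∈ A) → IsGPO F χ ε v →
          prj (fun n => v (n + 1)) = fhat (prj v)) ∧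
        (∀ x ∈ NUE F χ, 0 < limsup (fun n : ℕ => qeps F χ ε (fhatI (n : ℤ) x)) atTop →
          0 < limsup (fun n : ℕ => qeps F χ ε (fhatI (-(n : ℤ)) x)) atTop →
          ∃ v : ℤ → Chart, (∀ n, v n ∈ A) ∧ IsGPO F χ ε v ∧ Recurrent v ∧ prj v = x) := by
  obtain ⟨ε₀, hε₀, hsmall⟩ := exists_forall_isSmall F hχ
  refine ⟨ε₀, hε₀, fun ε hε hlt => ?_⟩
  have hs := hsmall ε hε hlt
  obtain ⟨N, hN⟩ := exists_isNet (F := F) (χ := χ) hA hε hs.le_one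
  have hshadows (v : ℤ → Chart) (hvN : ∀ n, v n ∈ qChart F χ ε '' N) (hv : IsGPO F χ ε v) :
      Shadows F χ v (shadowedPoint F χ v) := by
    refine shadows_shadowedPoint hA hχ hs hv fun n => ?_
    obtain ⟨y, hy, hyv⟩ := hvN n
    exact hyv ▸ isTempered_qeps hA hε hs.le_one (hN.mem_NUE y hy)
  obtain ⟨C, hC, α, hα₀, hα₁, hHölder⟩ := exists_dhat_le_mul_dSigma_rpow hA hχ hs
  refine ⟨qChart F χ ε '' N, hN.countable.image _, forall_mem_image.2 fun y hy =>
    isChart_qChart hA hε hs.le_one (hN.mem_NUE y hy) (hN.qeps_pos y hy), shadowedPoint F χ,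
    hshadows, ⟨C, hC, α, hα₀, hα₁, fun v w hvN hv hwN hw =>
      hHölder hv hw (hshadows v hvN hv) (hshadows w hwN hw)⟩,
    fun v hvN hv => ?_, fun x hx hfwd hbwd => ?_⟩
  · exact (hshadows v hvN hv).fhat.shadowedPoint_eq hA hχ hs fun n => hv (n + 1)
  · obtain ⟨v, hvN, hv, hrec, hvx⟩ := hN.exists_recurrent_gpo hA hs hx hfwd hbwd
    exact ⟨v, hvN, hv, hrec, hvx.shadowedPoint_eq hA hχ hs hv⟩

/-- properties of the triple `(Σ, σ, prj)` (Proposition 3.5). -/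
theorem pi_properties (F : GoodMap) (hA : F.SatA) (χ : ℝ) (hχ : 0 < χ) :
    ∃ ε₀ > 0, ∀ ε : ℝ, 0 < ε → ε < ε₀ →
      ∃ A : Set Chart, A.Countable ∧ (∀ c ∈ A, IsChart F χ ε c) ∧
      ∃ prj : (ℤ → Chart) → (ℤ → ℝ),
        -- prj assigns to each ε-gpo the unique point it shadows
        (∀ v : ℤ → Chart, (∀ n, v n ∈ A) → IsGPO F χ ε v → Shadows F χ v (prj v)) ∧
        -- (1) prj is Hölder continuous
        (∃ C > 0, ∃ α : ℝ, 0 < α ∧ α ≤ 1 ∧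
          ∀ v w : ℤ → Chart, (∀ n, v n ∈ A) → IsGPO F χ ε v →
            (∀ n, w n ∈ A) → IsGPO F χ ε w →
            dhat (prj v) (prj w) ≤ C * dSigma v w ^ α) ∧
        -- (2) prj ∘ σ = f̂ ∘ prj
        (∀ v : ℤ → Chart, (∀ n, v n ∈ A) → IsGPO F χ ε v →
          prj (fun n => v (n + 1)) = fhat (prj v)) ∧
        -- (3) prj[Σ^#] ⊇ NUE^#_χ
        (∀ x ∈ NUEsharp F χ ε, ∃ v : ℤ → Chart,
          (∀ n, v n ∈ A) ∧ IsGPO F χ ε v ∧ Recurrent v ∧ prj v = x) := by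
  obtain ⟨ε₀, hε₀, h⟩ := pi_properties_general F hA χ hχ
  refine ⟨ε₀, hε₀, fun ε hε hlt => ?_⟩
  obtain ⟨A, hA_countable, hcharts, prj, hshadows, hHölder, hequiv, hcoding⟩ := h ε hε hlt
  exact ⟨A, hA_countable, hcharts, prj, hshadows, hHölder, hequiv,
    fun x hx => hcoding x hx.1.1 hx.2.1 hx.2.2⟩

end OneDim
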